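/- arXiv:2506.02424 — 2 statements merged into one kernel-verified Lean document; each statement's English description precedes it below -/
import Mathlib

section
/- Let Ω ⊂ [−1,1]² be closed and suppose f : Ω → ℂ admits an infinitely differentiable extension to an open neighborhood of Ω. Then for each positive integer m there exists a constant C(m,f), depending on m and f but not on c, such that for each real number c > 1 there exists a Schwartz function f_b ∈ 𝒮(ℝ²) with: (1) the Fourier transform f̂_b is supported in [−c−4, c+4]²; (2) sup_{Ω} |f_b − f| ≤ C(m,f)/c^{2m}; (3) sup_{ℝ²} |f_b| ≤ 2 · sup_{Ω} |f| + C(m,f)/c^{2m}; and (4) sup_{ℝ²} |D^α f̂_b| ≤ 10 · sup_{Ω} |f| for all multi-indices α with |α| ≤ 2. -/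
open MeasureTheory Real

noncomputable section

/-- The partial derivative `∂/∂x` of a function on `ℝ²`. -/
def pd1 (f : ℝ × ℝ → ℂ) : ℝ × ℝ → ℂ := fun z => fderiv ℝ f z (1, 0)

/-- The partial derivative `∂/∂y` of a function on `ℝ²`. -/
def pd2 (f : ℝ × ℝ → ℂ) : ℝ × ℝ → ℂ := fun z => fderiv ℝ f z (0, 1)

/-- The multi-index partial derivative `D^α = ∂_x^{α₁} ∂_y^{α₂}` on `ℝ²`. -/
def mderiv2 (α : ℕ × ℕ) (f : ℝ × ℝ → ℂ) : ℝ × ℝ → ℂ := pd1^[α.1] (pd2^[α.2] f)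

/-- The Fourier transform on `ℝ²` with the paper's normalization:
`f̂(ξ) = (1/(4π²)) ∫∫ f(x) e^{-i ξ·x} dx`. -/
def paperFT (f : ℝ × ℝ → ℂ) (ξ : ℝ × ℝ) : ℂ :=
  (1 / (4 * (π : ℂ) ^ 2)) *
    ∫ x : ℝ × ℝ, f x * Complex.exp (-Complex.I * ((ξ.1 * x.1 + ξ.2 * x.2 : ℝ) : ℂ))

/-- The sup of `‖f‖` over a subset `S` of `ℝ²`. -/
def supOn (f : ℝ × ℝ → ℂ) (S : Set (ℝ × ℝ)) : ℝ := ⨆ z : S, ‖f (z : ℝ × ℝ)‖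

open scoped FourierTransform ContDiff Topology Manifold

/-- The plane with its Euclidean structure. -/
abbrev EPlane := WithLp 2 (ℝ × ℝ)

lemma bridge (F : SchwartzMap EPlane ℂ) (h : ℝ × ℝ → ℂ) (hF : ∀ x, F (WithLp.toLp 2 x) = h x)
    (ξ : ℝ × ℝ) :
    paperFT h ξ = (1 / (4 * (π : ℂ) ^ 2)) * (𝓕 F) ((2 * π)⁻¹ • WithLp.toLp 2 ξ) := by
  unfold paperFT
  congr 1
  rw [SchwartzMap.fourier_coe, Real.fourier_eq']
  rw [← (WithLp.volume_preserving_toLp (U := ℝ) (V := ℝ)).integral_comp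
    (MeasurableEquiv.toLp 2 (ℝ × ℝ)).measurableEmbedding]
  congr 1
  ext x
  rw [hF, smul_eq_mul, mul_comm]
  congr 2
  rw [real_inner_smul_right, WithLp.prod_inner_apply]
  have : (π : ℂ) ≠ 0 := by exact_mod_cast Real.pi_ne_zero
  simp
  field_simp

/-- The fixed frequency cutoff. -/
def cutoff : ContDiffBump (0 : ℝ × ℝ) := ⟨1 / 2, 1, by norm_num, by norm_num⟩

/-- The rescaled complex frequency cutoff. -/
def cutc (c : ℝ) (ξ : ℝ × ℝ) : ℂ := ((cutoff (c⁻¹ • ξ) : ℝ) : ℂ)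

lemma cutc_contDiff (c : ℝ) : ContDiff ℝ ∞ (cutc c) := by
  unfold cutc
  exact Complex.ofRealCLM.contDiff.comp (cutoff.contDiff.comp (contDiff_const_smul _))

lemma cutc_zero {c : ℝ} (hc : 0 < c) {ξ : ℝ × ℝ} (h : c ≤ ‖ξ‖) : cutc c ξ = 0 := by
  unfold cutc
  rw [cutoff.zero_of_le_dist]
  · simp
  · simp only [cutoff, dist_zero_right, norm_smul, norm_inv, Real.norm_of_nonneg hc.le]
    rw [inv_mul_eq_div, le_div_iff₀ hc]; linarith

lemma cutc_compact {c : ℝ} (hc : 0 < c) : HasCompactSupport (cutc c) := by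
  apply HasCompactSupport.of_support_subset_isCompact (isCompact_closedBall (0 : ℝ × ℝ) c)
  intro ξ hξ
  by_contra h
  apply hξ
  apply cutc_zero hc
  simp at h
  exact h.le

lemma cutc_one_sub {c : ℝ} (hc : 0 < c) (ξ : ℝ × ℝ) (n : ℕ) :
    ‖cutc c ξ - 1‖ ≤ (2 * ‖ξ‖ / c) ^ n := by
  by_cases h : ‖c⁻¹ • ξ‖ ≤ 1 / 2
  · have : cutc c ξ = 1 := by
      unfold cutc
      rw [cutoff.one_of_mem_closedBall]
      · simp
      · simpa [cutoff] using h
    rw [this]; simp; positivity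
  · push Not at h
    have h1 : 1 ≤ 2 * ‖ξ‖ / c := by
      rw [norm_smul, norm_inv, Real.norm_of_nonneg hc.le, inv_mul_eq_div] at h
      rw [mul_div_assoc]; linarith
    have h2 : ‖cutc c ξ - 1‖ ≤ 1 := by
      unfold cutc
      rw [← Complex.ofReal_one, ← Complex.ofReal_sub, Complex.norm_real, Real.norm_eq_abs, abs_le]
      constructor <;> linarith [cutoff.nonneg (x := c⁻¹ • ξ), cutoff.le_one (x := c⁻¹ • ξ)]
    exact h2.trans (one_le_pow₀ h1)

lemma core (g : ℝ × ℝ → ℂ) (hg : ContDiff ℝ ∞ g) (hgc : HasCompactSupport g) (n : ℕ) :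
    ∃ K : ℝ, ∀ c : ℝ, 0 < c → ∃ fb : SchwartzMap (ℝ × ℝ) ℂ,
      (paperFT fb = fun ξ => cutc c ξ * paperFT g ξ) ∧ ∀ z, ‖fb z - g z‖ ≤ K / c ^ n := by
  let e : EPlane ≃L[ℝ] ℝ × ℝ := WithLp.prodContinuousLinearEquiv 2 ℝ ℝ ℝ
  let gE : SchwartzMap EPlane ℂ :=
    SchwartzMap.compCLMOfContinuousLinearEquiv ℂ e (hgc.toSchwartzMap hg)
  have hgE : ∀ x, gE (WithLp.toLp 2 x) = g x := fun x => rfl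
  let A := ‖(e : EPlane →L[ℝ] ℝ × ℝ)‖
  refine ⟨∫ w, (4 * π * A) ^ n * (‖w‖ ^ n * ‖(𝓕 gE) w‖), fun c hc => ?_⟩
  let Ψ : EPlane → ℂ := fun w => cutc c ((2 * π) • e w)
  have hΨ : ContDiff ℝ ∞ Ψ :=
    (cutc_contDiff c).comp ((contDiff_const_smul _).comp e.contDiff)
  have hΨc : HasCompactSupport Ψ := by
    have := (cutc_compact hc).comp_homeomorph
      (e.toHomeomorph.trans (Homeomorph.smulOfNeZero (2 * π : ℝ) (by positivity)))
    exact this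
  have hHc : HasCompactSupport (fun w => Ψ w * (𝓕 gE) w) := hΨc.mul_right
  have hH : ContDiff ℝ ∞ (fun w => Ψ w * (𝓕 gE) w) := hΨ.mul ((𝓕 gE).smooth ⊤)
  let H : SchwartzMap EPlane ℂ := hHc.toSchwartzMap hH
  have hHa : ∀ w, H w = Ψ w * (𝓕 gE) w := fun w => rfl
  let FE : SchwartzMap EPlane ℂ := 𝓕⁻ H
  refine ⟨SchwartzMap.compCLMOfContinuousLinearEquiv ℂ e.symm FE, ?_, ?_⟩
  · ext ξ
    rw [bridge FE (SchwartzMap.compCLMOfContinuousLinearEquiv ℂ e.symm FE) (fun x => rfl),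
      bridge gE g hgE]
    have : 𝓕 FE = H := FourierTransform.fourier_fourierInv_eq H
    rw [this, hHa]
    have : Ψ ((2 * π)⁻¹ • WithLp.toLp 2 ξ) = cutc c ξ := by
      simp only [Ψ]
      rw [map_smul, smul_smul, mul_inv_cancel₀ (by positivity), one_smul]
      rfl
    rw [this]; ring
  · intro z
    have h1 : gE = 𝓕⁻ (𝓕 gE) := (FourierTransform.fourierInv_fourier_eq gE).symm
    have h2 : FE - gE = 𝓕⁻ (H - 𝓕 gE) := by
      rw [sub_eq_add_neg H, ← neg_one_smul ℂ (𝓕 gE), FourierTransform.fourierInv_add,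
        FourierTransform.fourierInv_smul, ← h1, neg_one_smul, sub_eq_add_neg]
    have h3 : (SchwartzMap.compCLMOfContinuousLinearEquiv ℂ e.symm FE) z - g z
        = (𝓕⁻ (H - 𝓕 gE)) (WithLp.toLp 2 z) := by
      rw [← h2]; rfl
    rw [h3, SchwartzMap.fourierInv_coe, Real.fourierInv_eq']
    have hint : Integrable (fun w => (4 * π * A) ^ n * (‖w‖ ^ n * ‖(𝓕 gE) w‖)) :=
      ((𝓕 gE).integrable_pow_mul volume n).const_mul _
    rw [← integral_div]
    apply norm_integral_le_of_norm_le (hint.div_const _)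
    filter_upwards with w
    have h4 : ‖(H - 𝓕 gE) w‖ = ‖Ψ w - 1‖ * ‖(𝓕 gE) w‖ := by
      rw [← norm_mul, sub_mul, one_mul]; rfl
    rw [norm_smul, h4]
    have h5 : ‖Ψ w - 1‖ ≤ (4 * π * A * ‖w‖ / c) ^ n := by
      refine (cutc_one_sub hc _ n).trans ?_
      have : ‖e w‖ ≤ A * ‖w‖ := (e : EPlane →L[ℝ] ℝ × ℝ).le_opNorm w
      rw [norm_smul, Real.norm_of_nonneg (by positivity : (0 : ℝ) ≤ 2 * π)]
      gcongr ?_ ^ n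
      gcongr ?_ / c
      nlinarith [Real.pi_pos]
    have h6 : ∀ t : ℝ, ‖Complex.exp ((t : ℂ) * Complex.I)‖ = 1 := Complex.norm_exp_ofReal_mul_I
    rw [h6, one_mul]
    calc _ ≤ (4 * π * A * ‖w‖ / c) ^ n * ‖(𝓕 gE) w‖ := by gcongr
      _ = _ := by rw [div_pow, mul_pow]; ring

/-- Directional derivative. -/
def dd (v : ℝ × ℝ) (f : ℝ × ℝ → ℂ) : ℝ × ℝ → ℂ := fun z => fderiv ℝ f z v

lemma dd_contDiff {f : ℝ × ℝ → ℂ} (hf : ContDiff ℝ ∞ f) (v : ℝ × ℝ) : ContDiff ℝ ∞ (dd v f) :=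
  (hf.fderiv_right (m := ∞) (by simp)).clm_apply contDiff_const

lemma dd_mul {f g : ℝ × ℝ → ℂ} (hf : Differentiable ℝ f) (hg : Differentiable ℝ g)
    (v : ℝ × ℝ) : dd v (fun z => f z * g z) = fun z => dd v f z * g z + f z * dd v g z := by
  ext z
  unfold dd
  rw [fderiv_fun_mul (hf z) (hg z)]
  simp
  ring

lemma dd_add {f g : ℝ × ℝ → ℂ} (hf : Differentiable ℝ f) (hg : Differentiable ℝ g)
    (v : ℝ × ℝ) : dd v (fun z => f z + g z) = fun z => dd v f z + dd v g z := by
  ext z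
  unfold dd
  rw [fderiv_fun_add (hf z) (hg z)]
  simp

lemma dd_scale {f : ℝ × ℝ → ℂ} (hf : Differentiable ℝ f) (v : ℝ × ℝ) (a : ℝ) (b : ℂ) :
    dd v (fun z => b * f (a • z)) = fun z => (b * a) * dd v f (a • z) := by
  ext z
  unfold dd
  have h1 : HasFDerivAt (fun z : ℝ × ℝ => a • z) (a • ContinuousLinearMap.id ℝ (ℝ × ℝ)) z :=
    (hasFDerivAt_id z).const_smul a
  have h2 := (((hf (a • z)).hasFDerivAt).comp z h1).const_mul b
  have h3 := h2.fderiv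
  simp only [Function.comp_def] at h3
  rw [h3]
  simp
  ring

lemma cutc_scale (c : ℝ) : cutc c = fun ξ => 1 * cutc 1 (c⁻¹ • ξ) := by
  ext ξ
  simp [cutc]

lemma dd_compact {f : ℝ × ℝ → ℂ} (hf : HasCompactSupport f) (v : ℝ × ℝ) :
    HasCompactSupport (dd v f) := hf.fderiv_apply ℝ v

lemma bounded_of {f : ℝ × ℝ → ℂ} (h : HasCompactSupport f) (hf : ContDiff ℝ ∞ f) :
    ∃ B : ℝ, 0 ≤ B ∧ ∀ x, ‖f x‖ ≤ B := by
  obtain ⟨B, hB⟩ := h.exists_bound_of_continuous hf.continuous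
  exact ⟨B, (norm_nonneg _).trans (hB 0), hB⟩

lemma cutc_dd_small (v w : ℝ × ℝ) : ∀ᶠ c : ℝ in Filter.atTop, ∀ ξ,
    ‖dd v (cutc c) ξ‖ ≤ 1 / 3 ∧ ‖dd v (dd w (cutc c)) ξ‖ ≤ 1 / 3 := by
  have hs := cutc_contDiff 1
  have hk := cutc_compact one_pos
  obtain ⟨B1, hB1, h1⟩ := bounded_of (dd_compact hk v) (dd_contDiff hs v)
  obtain ⟨B2, hB2, h2⟩ := bounded_of (dd_compact (dd_compact hk w) v)
    (dd_contDiff (dd_contDiff hs w) v)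
  filter_upwards [Filter.eventually_ge_atTop (max 1 (max (3 * B1) (3 * B2)))] with c hc ξ
  have hc1 : 1 ≤ c := (le_max_left _ _).trans hc
  have hcB1 : 3 * B1 ≤ c := (le_max_left _ _).trans ((le_max_right _ _).trans hc)
  have hcB2 : 3 * B2 ≤ c := (le_max_right _ _).trans ((le_max_right _ _).trans hc)
  have hc0 : 0 < c := by linarith
  rw [cutc_scale c]
  rw [dd_scale (hs.differentiable (by simp)), dd_scale (hs.differentiable (by simp)),
    dd_scale ((dd_contDiff hs w).differentiable (by simp))]
  simp only [norm_mul, norm_one, one_mul, Complex.norm_real, norm_inv, Real.norm_of_nonneg hc0.le]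
  have hi : c⁻¹ ≤ 1 := inv_le_one_of_one_le₀ hc1
  have hi0 : 0 < c⁻¹ := inv_pos.2 hc0
  constructor
  · calc _ ≤ c⁻¹ * B1 := by gcongr; exact h1 _
      _ ≤ _ := by rw [inv_mul_eq_div, div_le_iff₀ hc0]; linarith
  · calc _ ≤ c⁻¹ * 1 * B2 := by gcongr; exact h2 _
      _ ≤ _ := by rw [mul_one, inv_mul_eq_div, div_le_iff₀ hc0]; linarith

/-- The bilinear form behind `paperFT`. -/
def Lform : (ℝ × ℝ) →L[ℝ] (ℝ × ℝ) →L[ℝ] ℝ :=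
  (2 * π)⁻¹ • (((ContinuousLinearMap.mul ℝ ℝ).bilinearComp
      (ContinuousLinearMap.fst ℝ ℝ ℝ) (ContinuousLinearMap.fst ℝ ℝ ℝ)) +
    ((ContinuousLinearMap.mul ℝ ℝ).bilinearComp
      (ContinuousLinearMap.snd ℝ ℝ ℝ) (ContinuousLinearMap.snd ℝ ℝ ℝ)))

lemma Lform_apply (x y : ℝ × ℝ) : Lform x y = (2 * π)⁻¹ * (x.1 * y.1 + x.2 * y.2) := by
  simp [Lform]
  ring

lemma paperFT_eq (f : ℝ × ℝ → ℂ) : paperFT f = fun ξ => (1 / (4 * (π : ℂ) ^ 2)) *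
    VectorFourier.fourierIntegral 𝐞 volume Lform.toLinearMap₁₂ f ξ := by
  ext ξ
  unfold paperFT VectorFourier.fourierIntegral
  congr 2
  ext x
  rw [ContinuousLinearMap.toLinearMap₁₂_apply_apply_apply, Lform_apply, Circle.smul_def,
    Real.fourierChar_apply, smul_eq_mul, mul_comm]
  congr 2
  have : (π : ℂ) ≠ 0 := by exact_mod_cast Real.pi_ne_zero
  push_cast
  field_simp

/-- Multiplication by `-i v·x`. -/
def mulv (v : ℝ × ℝ) (f : ℝ × ℝ → ℂ) (x : ℝ × ℝ) : ℂ :=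
  -Complex.I * ((v.1 * x.1 + v.2 * x.2 : ℝ) : ℂ) * f x

lemma mulv_cont {f : ℝ × ℝ → ℂ} (hf : Continuous f) (v : ℝ × ℝ) : Continuous (mulv v f) := by
  unfold mulv; fun_prop

lemma mulv_compact {f : ℝ × ℝ → ℂ} (hf : HasCompactSupport f) (v : ℝ × ℝ) :
    HasCompactSupport (mulv v f) := hf.mul_left

lemma dd_paperFT {f : ℝ × ℝ → ℂ} (hf : Continuous f) (hc : HasCompactSupport f) (v : ℝ × ℝ) :
    dd v (paperFT f) = paperFT (mulv v f) := by
  have hi : Integrable f := hf.integrable_of_hasCompactSupport hc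
  have hi' : Integrable (fun x : ℝ × ℝ => ‖x‖ * ‖f x‖) := by
    apply Continuous.integrable_of_hasCompactSupport (by fun_prop)
    exact hc.norm.mul_left
  ext ξ
  have h := (VectorFourier.hasFDerivAt_fourierIntegral Lform hi hi' ξ).const_mul
    (1 / (4 * (π : ℂ) ^ 2))
  unfold dd
  rw [paperFT_eq, h.fderiv, paperFT_eq]
  rw [smul_apply, smul_eq_mul]
  congr 1
  have hcont : Continuous (VectorFourier.fourierSMulRight Lform f) := by
    unfold VectorFourier.fourierSMulRight
    apply Continuous.fun_const_smul
    exact (ContinuousLinearMap.smulRightL ℝ (ℝ × ℝ) ℂ).continuous₂.comp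
      (Lform.continuous.prodMk hf)
  have hcs : HasCompactSupport (VectorFourier.fourierSMulRight Lform f) := by
    apply hc.mono
    intro x hx h0
    apply hx
    simp [VectorFourier.fourierSMulRight, h0]
  rw [Real.fourierIntegral_continuousLinearMap_apply'
    (hcont.integrable_of_hasCompactSupport hcs)]
  congr 1
  ext x
  rw [VectorFourier.fourierSMulRight_apply, Lform_apply, mulv]
  have : (π : ℂ) ≠ 0 := by exact_mod_cast Real.pi_ne_zero
  simp
  field_simp

lemma paperFT_bound {h : ℝ × ℝ → ℂ} {D : ℝ} (hD : ∀ x, ‖h x‖ ≤ D)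
    (hs : ∀ x : ℝ × ℝ, 2 < ‖x‖ → h x = 0) (ξ : ℝ × ℝ) : ‖paperFT h ξ‖ ≤ D / 2 := by
  have hD0 : 0 ≤ D := (norm_nonneg _).trans (hD 0)
  unfold paperFT
  have hmem : ∀ x : ℝ × ℝ, x ∉ Set.Icc (-2 : ℝ) 2 ×ˢ Set.Icc (-2 : ℝ) 2 → 2 < ‖x‖ := by
    intro x hx
    by_contra hn
    push Not at hn
    apply hx
    rw [Prod.norm_def, max_le_iff, Real.norm_eq_abs, Real.norm_eq_abs, abs_le, abs_le] at hn
    exact ⟨⟨hn.1.1, hn.1.2⟩, ⟨hn.2.1, hn.2.2⟩⟩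
  rw [← setIntegral_eq_integral_of_forall_compl_eq_zero
    (s := Set.Icc (-2 : ℝ) 2 ×ˢ Set.Icc (-2 : ℝ) 2)
    (fun x hx => by rw [hs x (hmem x hx), zero_mul])]
  have hvol : volume (Set.Icc (-2 : ℝ) 2 ×ˢ Set.Icc (-2 : ℝ) 2) = 16 := by
    rw [Measure.volume_eq_prod, Measure.prod_prod, Real.volume_Icc]
    rw [← ENNReal.ofReal_mul (by norm_num)]
    norm_num
  have hb := norm_setIntegral_le_of_norm_le_const (μ := volume)
    (s := Set.Icc (-2 : ℝ) 2 ×ˢ Set.Icc (-2 : ℝ) 2)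
    (f := fun x : ℝ × ℝ =>
      h x * Complex.exp (-Complex.I * ((ξ.1 * x.1 + ξ.2 * x.2 : ℝ) : ℂ))) (C := D)
    (by rw [hvol]; norm_num) (by
      intro x _
      have : ‖Complex.exp (-Complex.I * ((ξ.1 * x.1 + ξ.2 * x.2 : ℝ) : ℂ))‖ = 1 := by
        rw [Complex.norm_exp]; simp
      rw [norm_mul, this, mul_one]
      exact hD x)
  have hr : volume.real (Set.Icc (-2 : ℝ) 2 ×ˢ Set.Icc (-2 : ℝ) 2) = 16 := by
    rw [Measure.real, hvol]; norm_num
  rw [hr] at hb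
  rw [norm_mul]
  have hp : ‖(1 / (4 * (π : ℂ) ^ 2))‖ = 1 / (4 * π ^ 2) := by
    simp [abs_of_pos Real.pi_pos]
  rw [hp]
  have hpi : 9 ≤ π ^ 2 := by nlinarith [Real.pi_gt_three]
  calc _ ≤ 1 / (4 * π ^ 2) * (D * 16) := by gcongr
    _ = D * (4 / π ^ 2) := by field_simp; ring
    _ ≤ D * (1 / 2) := by
      apply mul_le_mul_of_nonneg_left _ hD0
      rw [div_le_div_iff₀ (by positivity) (by norm_num)]
      linarith
    _ = _ := by ring

lemma mulv_bound {h : ℝ × ℝ → ℂ} {D : ℝ} (hD : ∀ x, ‖h x‖ ≤ D)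
    (hs : ∀ x : ℝ × ℝ, 2 < ‖x‖ → h x = 0) (v : ℝ × ℝ) (hv : |v.1| + |v.2| ≤ 1) :
    (∀ x, ‖mulv v h x‖ ≤ 2 * D) ∧ (∀ x : ℝ × ℝ, 2 < ‖x‖ → mulv v h x = 0) := by
  have hD0 : 0 ≤ D := (norm_nonneg _).trans (hD 0)
  constructor
  · intro x
    by_cases hx : 2 < ‖x‖
    · simp [mulv, hs x hx, hD0]
    · push Not at hx
      rw [mulv, norm_mul, norm_mul, Complex.norm_real]
      simp only [norm_neg, Complex.norm_I, one_mul]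
      rw [Prod.norm_def, max_le_iff, Real.norm_eq_abs, Real.norm_eq_abs] at hx
      have : ‖v.1 * x.1 + v.2 * x.2‖ ≤ 2 := by
        calc _ ≤ |v.1| * |x.1| + |v.2| * |x.2| := by
              rw [← abs_mul, ← abs_mul]; exact abs_add_le _ _
          _ ≤ |v.1| * 2 + |v.2| * 2 := by gcongr; exacts [hx.1, hx.2]
          _ ≤ 2 := by linarith
      gcongr
      exact hD x
  · intro x hx
    simp [mulv, hs x hx]

lemma leib1 {G P : ℝ × ℝ → ℂ} (hG : ContDiff ℝ ∞ G) (hP : ContDiff ℝ ∞ P) {N : ℝ}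
    (v ξ : ℝ × ℝ) (g0 : ‖G ξ‖ ≤ N) (gv : ‖dd v G ξ‖ ≤ N)
    (p0 : ‖P ξ‖ ≤ 1) (pv : ‖dd v P ξ‖ ≤ 1 / 3) :
    ‖dd v (fun z => P z * G z) ξ‖ ≤ 2 * N := by
  have hN : 0 ≤ N := (norm_nonneg _).trans g0
  rw [dd_mul (hP.differentiable (by simp)) (hG.differentiable (by simp))]
  calc _ ≤ ‖dd v P ξ‖ * ‖G ξ‖ + ‖P ξ‖ * ‖dd v G ξ‖ := by
        rw [← norm_mul, ← norm_mul]; exact norm_add_le _ _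
    _ ≤ 1 / 3 * N + 1 * N := by gcongr
    _ ≤ _ := by linarith

lemma leib2 {G P : ℝ × ℝ → ℂ} (hG : ContDiff ℝ ∞ G) (hP : ContDiff ℝ ∞ P) {N : ℝ}
    (v w ξ : ℝ × ℝ) (g0 : ‖G ξ‖ ≤ N) (gv : ‖dd v G ξ‖ ≤ N) (gw : ‖dd w G ξ‖ ≤ N)
    (gvw : ‖dd v (dd w G) ξ‖ ≤ N)
    (p0 : ‖P ξ‖ ≤ 1) (pv : ‖dd v P ξ‖ ≤ 1 / 3) (pw : ‖dd w P ξ‖ ≤ 1 / 3)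
    (pvw : ‖dd v (dd w P) ξ‖ ≤ 1 / 3) :
    ‖dd v (dd w (fun z => P z * G z)) ξ‖ ≤ 2 * N := by
  have hN : 0 ≤ N := (norm_nonneg _).trans g0
  have dP := hP.differentiable (by simp)
  have dG := hG.differentiable (by simp)
  have dPw := (dd_contDiff hP w).differentiable (by simp)
  have dGw := (dd_contDiff hG w).differentiable (by simp)
  rw [dd_mul dP dG, dd_add (dPw.fun_mul dG) (dP.fun_mul dGw), dd_mul dPw dG, dd_mul dP dGw]
  calc _ ≤ (‖dd v (dd w P) ξ‖ * ‖G ξ‖ + ‖dd w P ξ‖ * ‖dd v G ξ‖) +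
        (‖dd v P ξ‖ * ‖dd w G ξ‖ + ‖P ξ‖ * ‖dd v (dd w G) ξ‖) := by
        simp only [← norm_mul]
        exact (norm_add_le _ _).trans (add_le_add (norm_add_le _ _) (norm_add_le _ _))
    _ ≤ (1 / 3 * N + 1 / 3 * N) + (1 / 3 * N + 1 * N) := by gcongr
    _ = _ := by ring

lemma pd_iter_zero (n : ℕ) : pd1^[n] (fun _ => 0) = (fun _ => 0) ∧
    pd2^[n] (fun _ => 0) = (fun _ => 0) := by
  have h1 : pd1 (fun _ => 0) = fun _ => 0 := by ext z; simp [pd1]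
  have h2 : pd2 (fun _ => 0) = fun _ => 0 := by ext z; simp [pd2]
  exact ⟨Function.iterate_fixed h1 n, Function.iterate_fixed h2 n⟩

lemma mderiv2_zero (α : ℕ × ℕ) : mderiv2 α (fun _ => 0) = fun _ => 0 := by
  unfold mderiv2
  rw [(pd_iter_zero α.2).2, (pd_iter_zero α.1).1]

lemma paperFT_contDiff {g : ℝ × ℝ → ℂ} (hg : ContDiff ℝ ∞ g) (hgc : HasCompactSupport g) :
    ContDiff ℝ ∞ (paperFT g) := by
  let e : EPlane ≃L[ℝ] ℝ × ℝ := WithLp.prodContinuousLinearEquiv 2 ℝ ℝ ℝ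
  let gE : SchwartzMap EPlane ℂ :=
    SchwartzMap.compCLMOfContinuousLinearEquiv ℂ e (hgc.toSchwartzMap hg)
  have : paperFT g = fun ξ => (1 / (4 * (π : ℂ) ^ 2)) * (𝓕 gE) ((2 * π)⁻¹ • e.symm ξ) := by
    ext ξ
    exact bridge gE g (fun x => rfl) ξ
  rw [this]
  exact contDiff_const.mul (((𝓕 gE).smooth ⊤).comp ((contDiff_const_smul _).comp e.symm.contDiff))

lemma exists_ext (Ω : Set (ℝ × ℝ)) (hΩclosed : IsClosed Ω)
    (hΩsub : Ω ⊆ Set.Icc ((-1, -1) : ℝ × ℝ) ((1, 1) : ℝ × ℝ))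
    (f : ℝ × ℝ → ℂ)
    (hf : ∃ U : Set (ℝ × ℝ), IsOpen U ∧ Ω ⊆ U ∧ ContDiffOn ℝ (⊤ : ℕ∞) f U)
    (M : ℝ) (hM : 0 < M) (hfM : ∀ z ∈ Ω, ‖f z‖ ≤ M) :
    ∃ g : ℝ × ℝ → ℂ, ContDiff ℝ ∞ g ∧ (∀ z ∈ Ω, g z = f z) ∧ (∀ z, ‖g z‖ ≤ 2 * M) ∧
      ∀ z : ℝ × ℝ, 2 < ‖z‖ → g z = 0 := by
  obtain ⟨U, hU, hΩU, hfU⟩ := hf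
  have hV : IsOpen (U ∩ f ⁻¹' (Metric.ball 0 (2 * M))) :=
    hfU.continuousOn.isOpen_inter_preimage hU Metric.isOpen_ball
  set V := (U ∩ f ⁻¹' (Metric.ball 0 (2 * M))) ∩ Metric.ball (0 : ℝ × ℝ) 2 with hVdef
  have hVo : IsOpen V := hV.inter Metric.isOpen_ball
  have hΩV : Ω ⊆ V := by
    intro z hz
    refine ⟨⟨hΩU hz, ?_⟩, ?_⟩
    · have := hfM z hz
      simp only [Set.mem_preimage, mem_ball_zero_iff]; linarith
    · have := hΩsub hz
      rw [mem_ball_zero_iff, Prod.norm_def, max_lt_iff, Real.norm_eq_abs, Real.norm_eq_abs,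
        abs_lt, abs_lt]
      obtain ⟨⟨h1, h2⟩, h3, h4⟩ := this
      simp only at h1 h2 h3 h4
      refine ⟨⟨?_, ?_⟩, ?_, ?_⟩ <;> linarith
  obtain ⟨χ, h0, h1, h01⟩ := exists_contMDiffMap_zero_one_nhds_of_isClosed (n := (⊤ : ℕ∞))
    𝓘(ℝ, ℝ × ℝ) hVo.isClosed_compl hΩclosed
    (Set.disjoint_left.2 fun z hz hz' => hz (hΩV hz'))
  have hχ : ContDiff ℝ ∞ χ := χ.contMDiff.contDiff
  have h0' : ∀ z ∉ V, ∀ᶠ x in 𝓝 z, χ x = 0 := fun z hz =>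
    (Filter.eventually_iff_exists_mem.2 ⟨_, nhds_le_nhdsSet hz h0, fun x hx => hx⟩)
  refine ⟨fun z => (χ z : ℂ) * f z, ?_, ?_, ?_, ?_⟩
  · rw [contDiff_iff_contDiffAt]
    intro z
    by_cases hz : z ∈ V
    · exact (Complex.ofRealCLM.contDiff.comp hχ).contDiffAt.mul
        (hfU.contDiffAt (hU.mem_nhds hz.1.1))
    · apply (contDiffAt_const (c := (0 : ℂ))).congr_of_eventuallyEq
      filter_upwards [h0' z hz] with x hx
      simp [hx]
  · intro z hz
    have : χ z = 1 := (h1.filter_mono (nhds_le_nhdsSet hz)).self_of_nhds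
    simp [this]
  · intro z
    by_cases hz : z ∈ V
    · rw [norm_mul, Complex.norm_real]
      have ha : ‖χ z‖ ≤ 1 := by
        rw [Real.norm_of_nonneg (h01 z).1]; exact (h01 z).2
      have hb : ‖f z‖ ≤ 2 * M := by
        have := hz.1.2
        simp only [Set.mem_preimage, mem_ball_zero_iff] at this
        exact this.le
      calc _ ≤ 1 * (2 * M) := by gcongr
        _ = _ := one_mul _
    · have := (h0' z hz).self_of_nhds
      simp [this, hM.le]
  · intro z hz
    have hzV : z ∉ V := fun h => by
      have := h.2
      rw [mem_ball_zero_iff] at this; linarith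
    have := (h0' z hzV).self_of_nhds
    simp [this]

theorem main_pos (Ω : Set (ℝ × ℝ)) (f g : ℝ × ℝ → ℂ) (m : ℕ) (M : ℝ) (hM : 0 < M)
    (hfM : ∀ z ∈ Ω, ‖f z‖ ≤ M) (hg : ContDiff ℝ ∞ g) (hgf : ∀ z ∈ Ω, g z = f z)
    (hgM : ∀ z, ‖g z‖ ≤ 2 * M) (hgs : ∀ z : ℝ × ℝ, 2 < ‖z‖ → g z = 0) :
    ∃ C : ℝ, ∀ c : ℝ, 1 < c → ∃ fb : SchwartzMap (ℝ × ℝ) ℂ,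
      (∀ ξ : ℝ × ℝ, ξ ∉ Set.Icc ((-(c + 4), -(c + 4)) : ℝ × ℝ) ((c + 4, c + 4) : ℝ × ℝ) →
        paperFT (⇑fb) ξ = 0) ∧
      (∀ z ∈ Ω, ‖fb z - f z‖ ≤ C / c ^ (2 * m)) ∧
      (∀ z : ℝ × ℝ, ‖fb z‖ ≤ 2 * M + C / c ^ (2 * m)) ∧
      (∀ α : ℕ × ℕ, α.1 + α.2 ≤ 2 → ∀ ξ : ℝ × ℝ,
        ‖mderiv2 α (paperFT ⇑fb) ξ‖ ≤ 10 * M) := by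
  have hgc : HasCompactSupport g := by
    apply HasCompactSupport.of_support_subset_isCompact (isCompact_closedBall (0 : ℝ × ℝ) 2)
    intro z hz
    by_contra h
    rw [mem_closedBall_zero_iff, not_le] at h
    exact hz (hgs z h)
  obtain ⟨K, hK⟩ := core g hg hgc (2 * m)
  have hsm := ((cutc_dd_small (1, 0) (1, 0)).and (cutc_dd_small (1, 0) (0, 1))).and
    (cutc_dd_small (0, 1) (0, 1))
  obtain ⟨c0, hc0⟩ := Filter.eventually_atTop.1 hsm
  refine ⟨max K (M * |c0| ^ (2 * m)), fun c hc => ?_⟩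
  have hcpos : 0 < c := by linarith
  by_cases hcc : c0 ≤ c
  · obtain ⟨fb, hfb, herr⟩ := hK c hcpos
    have herr' : ∀ z, ‖fb z - g z‖ ≤ max K (M * |c0| ^ (2 * m)) / c ^ (2 * m) := fun z =>
      (herr z).trans (by gcongr; exact le_max_left _ _)
    refine ⟨fb, ?_, ?_, ?_, ?_⟩
    · intro ξ hξ
      rw [hfb]
      have : c ≤ ‖ξ‖ := by
        by_contra h
        push Not at h
        rw [Prod.norm_def, max_lt_iff, Real.norm_eq_abs, Real.norm_eq_abs, abs_lt, abs_lt] at h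
        apply hξ
        obtain ⟨⟨h1, h2⟩, h3, h4⟩ := h
        refine ⟨⟨?_, ?_⟩, ?_, ?_⟩ <;> simp only <;> linarith
      simp [cutc_zero hcpos this]
    · intro z hz
      rw [← hgf z hz]; exact herr' z
    · intro z
      calc ‖fb z‖ = ‖g z + (fb z - g z)‖ := by congr 1; ring
        _ ≤ _ := (norm_add_le _ _).trans (add_le_add (hgM z) (herr' z))
    · rw [hfb]
      have hP := cutc_contDiff c
      have hG := paperFT_contDiff hg hgc
      have p0 : ∀ ξ, ‖cutc c ξ‖ ≤ 1 := by
        intro ξ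
        unfold cutc
        rw [Complex.norm_real, Real.norm_of_nonneg cutoff.nonneg]
        exact cutoff.le_one
      have g0 : ∀ ξ, ‖paperFT g ξ‖ ≤ 4 * M := fun ξ =>
        (paperFT_bound hgM hgs ξ).trans (by linarith)
      have g1 : ∀ v : ℝ × ℝ, |v.1| + |v.2| ≤ 1 → ∀ ξ, ‖dd v (paperFT g) ξ‖ ≤ 4 * M := by
        intro v hv ξ
        rw [dd_paperFT hg.continuous hgc]
        have := mulv_bound hgM hgs v hv
        exact (paperFT_bound this.1 this.2 ξ).trans (by linarith)
      have g2 : ∀ v w : ℝ × ℝ, |v.1| + |v.2| ≤ 1 → |w.1| + |w.2| ≤ 1 →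
          ∀ ξ, ‖dd v (dd w (paperFT g)) ξ‖ ≤ 4 * M := by
        intro v w hv hw ξ
        rw [dd_paperFT hg.continuous hgc,
          dd_paperFT (mulv_cont hg.continuous w) (mulv_compact hgc w)]
        have h1 := mulv_bound hgM hgs w hw
        have h2 := mulv_bound h1.1 h1.2 v hv
        exact (paperFT_bound h2.1 h2.2 ξ).trans (by linarith)
      have e1 : |((1, 0) : ℝ × ℝ).1| + |((1, 0) : ℝ × ℝ).2| ≤ 1 := by simp
      have e2 : |((0, 1) : ℝ × ℝ).1| + |((0, 1) : ℝ × ℝ).2| ≤ 1 := by simp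
      obtain ⟨⟨s1, s2⟩, s3⟩ := hc0 c hcc
      rintro ⟨a, b⟩ hab ξ
      simp only at hab
      have key : ‖mderiv2 (a, b) (fun ξ => cutc c ξ * paperFT g ξ) ξ‖ ≤ 2 * (4 * M) := by
        have ha : a ≤ 2 := by omega
        have hb : b ≤ 2 := by omega
        interval_cases a <;> interval_cases b <;> first | (exfalso; omega) | skip
        · change ‖cutc c ξ * paperFT g ξ‖ ≤ _
          rw [norm_mul]
          calc _ ≤ 1 * (4 * M) := by gcongr; exacts [p0 ξ, g0 ξ]
            _ ≤ _ := by linarith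
        · exact leib1 hG hP (0, 1) ξ (g0 ξ) (g1 _ e2 ξ) (p0 ξ) (s3 ξ).1
        · exact leib2 hG hP (0, 1) (0, 1) ξ (g0 ξ) (g1 _ e2 ξ) (g1 _ e2 ξ) (g2 _ _ e2 e2 ξ)
            (p0 ξ) (s3 ξ).1 (s3 ξ).1 (s3 ξ).2
        · exact leib1 hG hP (1, 0) ξ (g0 ξ) (g1 _ e1 ξ) (p0 ξ) (s1 ξ).1
        · exact leib2 hG hP (1, 0) (0, 1) ξ (g0 ξ) (g1 _ e1 ξ) (g1 _ e2 ξ) (g2 _ _ e1 e2 ξ)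
            (p0 ξ) (s1 ξ).1 (s3 ξ).1 (s2 ξ).2
        · exact leib2 hG hP (1, 0) (1, 0) ξ (g0 ξ) (g1 _ e1 ξ) (g1 _ e1 ξ) (g2 _ _ e1 e1 ξ)
            (p0 ξ) (s1 ξ).1 (s1 ξ).1 (s1 ξ).2
      linarith
  · push Not at hcc
    have hC : M ≤ max K (M * |c0| ^ (2 * m)) / c ^ (2 * m) := by
      rw [le_div_iff₀ (by positivity)]
      refine le_trans ?_ (le_max_right _ _)
      gcongr
      exact hcc.le.trans (le_abs_self _)
    have z0 : paperFT (⇑(0 : SchwartzMap (ℝ × ℝ) ℂ)) = fun _ => 0 := by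
      ext ξ; simp [paperFT]
    refine ⟨0, ?_, ?_, ?_, ?_⟩
    · intro ξ _; rw [z0]
    · intro z hz
      simpa using (hfM z hz).trans hC
    · intro z
      simp only [zero_apply, norm_zero]; linarith
    · intro α _ ξ
      rw [z0, mderiv2_zero]; simp; exact hM.le

/-- Existence of bandlimited approximations: for `f` smooth near a closed
set `Ω ⊆ [-1,1]²` and every `m ≥ 1` there is a constant `C(m,f)` such that for every `c > 1`
there is a Schwartz function `f_b` whose Fourier transform is supported in `[-c-4, c+4]²`,
with `|f_b - f| ≤ C/c^{2m}` on `Ω`, `|f_b| ≤ 2 sup_Ω |f| + C/c^{2m}` on `ℝ²`, and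
`|D^α f̂_b| ≤ 10 sup_Ω |f|` for all `|α| ≤ 2`. -/
theorem bandlimited_approximation (Ω : Set (ℝ × ℝ)) (hΩclosed : IsClosed Ω)
    (hΩsub : Ω ⊆ Set.Icc ((-1, -1) : ℝ × ℝ) ((1, 1) : ℝ × ℝ))
    (f : ℝ × ℝ → ℂ)
    (hf : ∃ U : Set (ℝ × ℝ), IsOpen U ∧ Ω ⊆ U ∧ ContDiffOn ℝ (⊤ : ℕ∞) f U)
    (m : ℕ) (hm : 0 < m) :
    ∃ C : ℝ, ∀ c : ℝ, 1 < c → ∃ fb : SchwartzMap (ℝ × ℝ) ℂ,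
      (∀ ξ : ℝ × ℝ, ξ ∉ Set.Icc ((-(c + 4), -(c + 4)) : ℝ × ℝ) ((c + 4, c + 4) : ℝ × ℝ) →
        paperFT (⇑fb) ξ = 0) ∧
      (∀ z ∈ Ω, ‖fb z - f z‖ ≤ C / c ^ (2 * m)) ∧
      (∀ z : ℝ × ℝ, ‖fb z‖ ≤ 2 * supOn f Ω + C / c ^ (2 * m)) ∧
      (∀ α : ℕ × ℕ, α.1 + α.2 ≤ 2 → ∀ ξ : ℝ × ℝ,
        ‖mderiv2 α (paperFT ⇑fb) ξ‖ ≤ 10 * supOn f Ω) := by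
  have hz0 : paperFT (⇑(0 : SchwartzMap (ℝ × ℝ) ℂ)) = fun _ => 0 := by
    ext ξ; simp [paperFT]
  have hcomp : IsCompact Ω := isCompact_Icc.of_isClosed_subset hΩclosed hΩsub
  have hcont : ContinuousOn f Ω := by
    obtain ⟨U, _, hU, h⟩ := hf
    exact h.continuousOn.mono hU
  have hbdd : BddAbove (Set.range fun z : Ω => ‖f (z : ℝ × ℝ)‖) := by
    obtain ⟨B, hB⟩ := hcomp.exists_bound_of_continuousOn hcont
    refine ⟨B, ?_⟩
    rintro _ ⟨z, rfl⟩
    exact hB z z.2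
  have hfM : ∀ z ∈ Ω, ‖f z‖ ≤ supOn f Ω := fun z hz => le_ciSup hbdd ⟨z, hz⟩
  have hM0 : 0 ≤ supOn f Ω := Real.iSup_nonneg fun z => norm_nonneg _
  rcases hM0.eq_or_lt with hM | hM
  · refine ⟨0, fun c hc => ⟨0, ?_, ?_, ?_, ?_⟩⟩
    · intro ξ _; rw [hz0]
    · intro z hz
      have := hfM z hz
      simpa [← hM] using this
    · intro z; simp [← hM]
    · intro α _ ξ
      rw [hz0, mderiv2_zero]; simp [← hM]
  · obtain ⟨g, h1, h2, h3, h4⟩ := exists_ext Ω hΩclosed hΩsub f hf _ hM hfM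
    exact main_pos Ω f g m _ hM hfM h1 h2 h3 h4
end
end

section
/- Let φ be a tempered distribution on ℝ² whose Fourier transform is a tempered distribution of order at most p supported in the square [−c,c]². Then φ coincides with (is represented by integration against) an entire function of the form φ(x,y) = Σ_{|α|≤p} (x,y)^α ∫_{[−c,c]²} e^{i(ξ₁x + ξ₂y)} dμ_α(ξ₁,ξ₂), where each μ_α is a complex Radon measure on [−c,c]², and (x,y)^α denotes the monomial x^{α₁} y^{α₂}. -/
open MeasureTheory Real

noncomputable section

/-- Tempered distributions on `ℝ²`. -/
abbrev TDist2 := SchwartzMap (ℝ × ℝ) ℂ →L[ℂ] ℂ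

/-- The support of a tempered distribution on `ℝ²`. -/
def distSupport2 (T : TDist2) : Set (ℝ × ℝ) :=
  (⋃₀ {U : Set (ℝ × ℝ) |
    IsOpen U ∧ ∀ ψ : SchwartzMap (ℝ × ℝ) ℂ, tsupport ⇑ψ ⊆ U → T ψ = 0})ᶜ

/-- A tempered distribution on `ℝ²` has order at most `p`. -/
def hasOrderAtMost2 (T : TDist2) (p : ℕ) : Prop :=
  ∀ K : Set (ℝ × ℝ), IsCompact K → ∃ M : ℝ,
    ∀ ψ : SchwartzMap (ℝ × ℝ) ℂ, tsupport ⇑ψ ⊆ K →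
      ∀ B : ℝ, 0 ≤ B →
        (∀ α : ℕ × ℕ, α.1 + α.2 ≤ p → ∀ x ∈ K, ‖mderiv2 α (⇑ψ) x‖ ≤ B) →
        ‖T ψ‖ ≤ M * B

section
open scoped SchwartzMap FourierTransform LineDeriv

/-- the equivalence with the Euclidean plane, scaled by `(2π)⁻¹` -/
def eV : (ℝ × ℝ) ≃L[ℝ] WithLp 2 (ℝ × ℝ) := (WithLp.prodContinuousLinearEquiv 2 ℝ ℝ ℝ).symm

def twoPiU : ℝˣ := Units.mk0 (2 * π)⁻¹ (by positivity)

def eS : (ℝ × ℝ) ≃L[ℝ] WithLp 2 (ℝ × ℝ) :=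
  (ContinuousLinearEquiv.unitsEquivAut ℝ twoPiU |>.prodCongr
    (ContinuousLinearEquiv.unitsEquivAut ℝ twoPiU)).trans eV

lemma eS_apply (x : ℝ × ℝ) : eS x = WithLp.toLp 2 ((2 * π)⁻¹ * x.1, (2 * π)⁻¹ * x.2) := by
  simp [eS, eV, twoPiU, mul_comm]

/-- Inverse Fourier transform in the normalization of the paper. -/
def invF (ψ : 𝓢(ℝ × ℝ, ℂ)) : 𝓢(ℝ × ℝ, ℂ) :=
  SchwartzMap.compCLMOfContinuousLinearEquiv ℂ eS
    (𝓕⁻ (SchwartzMap.compCLMOfContinuousLinearEquiv ℂ eV.symm ψ))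

lemma invF_apply (ψ : 𝓢(ℝ × ℝ, ℂ)) (ξ : ℝ × ℝ) :
    invF ψ ξ = ∫ z : ℝ × ℝ, Complex.exp (Complex.I * ((ξ.1 * z.1 + ξ.2 * z.2 : ℝ) : ℂ)) * ψ z := by
  have h := (WithLp.volume_preserving_toLp ℝ ℝ).integral_comp 
    (MeasurableEquiv.toLp 2 (ℝ × ℝ)).measurableEmbedding
    (fun v : WithLp 2 (ℝ × ℝ) => 𝐞 (inner ℝ v (eS ξ)) • 
      (SchwartzMap.compCLMOfContinuousLinearEquiv ℂ eV.symm ψ) v)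
  simp only [invF, SchwartzMap.compCLMOfContinuousLinearEquiv_apply, Function.comp]
  rw [SchwartzMap.fourierInv_coe, Real.fourierInv_eq, ← h]
  congr 1; ext z
  simp only [SchwartzMap.compCLMOfContinuousLinearEquiv_apply, Function.comp]
  rw [Circle.smul_def, smul_eq_mul, Real.fourierChar_apply]
  congr 1
  rw [eS_apply]
  congr 1
  simp [WithLp.prod_inner_apply]
  field_simp

lemma paperFT_invF (ψ : 𝓢(ℝ × ℝ, ℂ)) (ξ : ℝ × ℝ) : ψ ξ = paperFT (⇑(invF ψ)) ξ := by
  set g := SchwartzMap.compCLMOfContinuousLinearEquiv ℂ eV.symm ψ with hg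
  have h1 : ψ ξ = (𝓕 (𝓕⁻ g)) (eV ξ) := by
    rw [FourierTransform.fourier_fourierInv_eq]; simp [hg]
  have h := (WithLp.volume_preserving_toLp ℝ ℝ).integral_comp 
    (MeasurableEquiv.toLp 2 (ℝ × ℝ)).measurableEmbedding
    (fun v : WithLp 2 (ℝ × ℝ) => 𝐞 (-inner ℝ v (eV ξ)) • (𝓕⁻ g) v)
  rw [h1, SchwartzMap.fourier_coe, Real.fourier_eq, ← h]
  have h2 := MeasureTheory.Measure.integral_comp_smul (volume : Measure (ℝ × ℝ))
    (fun x : ℝ × ℝ => 𝐞 (-inner ℝ (WithLp.toLp 2 x) (eV ξ)) • (𝓕⁻ g) (WithLp.toLp 2 x)) (2 * π)⁻¹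
  unfold paperFT
  have h3 : ∀ x : ℝ × ℝ, (invF ψ) x * Complex.exp (-Complex.I * ((ξ.1 * x.1 + ξ.2 * x.2 : ℝ) : ℂ))
    = 𝐞 (-inner ℝ (WithLp.toLp 2 ((2 * π)⁻¹ • x)) (eV ξ)) • (𝓕⁻ g) (WithLp.toLp 2 ((2 * π)⁻¹ • x)) := by
    intro x
    rw [Circle.smul_def, smul_eq_mul, Real.fourierChar_apply, mul_comm]
    congr 1
    · congr 1
      simp [WithLp.prod_inner_apply, eV]
      field_simp
      ring
    · simp only [invF, SchwartzMap.compCLMOfContinuousLinearEquiv_apply, Function.comp, eS_apply]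
      rfl
  simp_rw [h3]
  rw [h2]
  have : Module.finrank ℝ (ℝ × ℝ) = 2 := by simp
  rw [this, abs_of_pos (by positivity)]
  rw [Complex.real_smul, ← mul_assoc]
  rw [show (1 / (4 * (π : ℂ) ^ 2)) * (((((2 * π)⁻¹ ^ 2)⁻¹ : ℝ)) : ℂ) = 1 by
    push_cast; field_simp; norm_num]
  simp

def m1 : 𝓢(ℝ × ℝ, ℂ) →L[ℂ] 𝓢(ℝ × ℝ, ℂ) := SchwartzMap.smulLeftCLM ℂ (fun z : ℝ × ℝ => Complex.I * (z.1 : ℂ))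
def m2 : 𝓢(ℝ × ℝ, ℂ) →L[ℂ] 𝓢(ℝ × ℝ, ℂ) := SchwartzMap.smulLeftCLM ℂ (fun z : ℝ × ℝ => Complex.I * (z.2 : ℂ))

lemma tg1 : Function.HasTemperateGrowth (fun z : ℝ × ℝ => Complex.I * (z.1 : ℂ)) := by
  have : Function.HasTemperateGrowth (fun z : ℝ × ℝ => (z.1 : ℂ)) :=
    (Complex.ofRealCLM.comp (ContinuousLinearMap.fst ℝ ℝ ℝ)).hasTemperateGrowth
  fun_prop
lemma tg2 : Function.HasTemperateGrowth (fun z : ℝ × ℝ => Complex.I * (z.2 : ℂ)) := by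
  have : Function.HasTemperateGrowth (fun z : ℝ × ℝ => (z.2 : ℂ)) :=
    (Complex.ofRealCLM.comp (ContinuousLinearMap.snd ℝ ℝ ℝ)).hasTemperateGrowth
  fun_prop

lemma m1_apply (ψ : 𝓢(ℝ × ℝ, ℂ)) (z) : m1 ψ z = Complex.I * z.1 * ψ z := by
  simp [m1, SchwartzMap.smulLeftCLM_apply_apply tg1]
lemma m2_apply (ψ : 𝓢(ℝ × ℝ, ℂ)) (z) : m2 ψ z = Complex.I * z.2 * ψ z := by
  simp [m2, SchwartzMap.smulLeftCLM_apply_apply tg2]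

lemma line_invF (ψ : 𝓢(ℝ × ℝ, ℂ)) (v : ℝ × ℝ) (η : 𝓢(ℝ × ℝ, ℂ))
   (h : ∀ z, η z = Complex.I * (v.1 * z.1 + v.2 * z.2 : ℝ) * ψ z) : ∂_{v} (invF ψ) = invF η := by
  unfold invF
  rw [SchwartzMap.lineDerivOp_compCLMOfContinuousLinearEquiv, SchwartzMap.lineDerivOp_fourierInv_eq]
  congr 2
  ext z
  have : (inner ℝ · (eS v)).HasTemperateGrowth := ((innerSL ℝ).flip (eS v)).hasTemperateGrowth
  rw [smul_apply, SchwartzMap.smulLeftCLM_apply_apply this]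
  simp only [SchwartzMap.compCLMOfContinuousLinearEquiv_apply, Function.comp, h, eS_apply, WithLp.prod_inner_apply]
  simp [eV]
  field_simp

lemma pd1_invF (ψ : 𝓢(ℝ × ℝ, ℂ)) : pd1 (invF ψ) = invF (m1 ψ) := by
  rw [← line_invF ψ (1, 0) (m1 ψ) (by simp [m1_apply])]
  ext x; rfl
lemma pd2_invF (ψ : 𝓢(ℝ × ℝ, ℂ)) : pd2 (invF ψ) = invF (m2 ψ) := by
  rw [← line_invF ψ (0, 1) (m2 ψ) (by simp [m2_apply])]
  ext x; rfl

lemma mderiv2_invF (ψ : 𝓢(ℝ × ℝ, ℂ)) (α : ℕ × ℕ) (ξ : ℝ × ℝ) :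
    mderiv2 α (invF ψ) ξ = ∫ z : ℝ × ℝ, Complex.exp (Complex.I * ((ξ.1 * z.1 + ξ.2 * z.2 : ℝ) : ℂ)) *
      (Complex.I ^ (α.1 + α.2) * ((z.1 : ℂ) ^ α.1 * (z.2 : ℂ) ^ α.2 * ψ z)) := by
  have h2 : ∀ n, ∀ ψ : 𝓢(ℝ × ℝ, ℂ), pd2^[n] (invF ψ) = invF (m2^[n] ψ) := by
    intro n
    induction n with
    | zero => intro ψ; rfl
    | succ n ih => intro ψ; rw [Function.iterate_succ_apply, pd2_invF, ih]; rfl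
  have h1 : ∀ n, ∀ ψ : 𝓢(ℝ × ℝ, ℂ), pd1^[n] (invF ψ) = invF (m1^[n] ψ) := by
    intro n
    induction n with
    | zero => intro ψ; rfl
    | succ n ih => intro ψ; rw [Function.iterate_succ_apply, pd1_invF, ih]; rfl
  have g2 : ∀ n, ∀ ψ : 𝓢(ℝ × ℝ, ℂ), ∀ z, (m2^[n] ψ) z = (Complex.I * z.2) ^ n * ψ z := by
    intro n
    induction n with
    | zero => intro ψ z; simp
    | succ n ih => intro ψ z; rw [Function.iterate_succ_apply, ih, m2_apply]; ring
  have g1 : ∀ n, ∀ ψ : 𝓢(ℝ × ℝ, ℂ), ∀ z, (m1^[n] ψ) z = (Complex.I * z.1) ^ n * ψ z := by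
    intro n
    induction n with
    | zero => intro ψ z; simp
    | succ n ih => intro ψ z; rw [Function.iterate_succ_apply, ih, m1_apply]; ring
  rw [mderiv2, h2, h1, invF_apply]
  congr 1; ext z
  rw [g1, g2]; ring

end

section
open scoped NNReal ENNReal CompactlySupported

lemma hb_factor {E F : Type*} [AddCommGroup E] [Module ℂ E] [NormedAddCommGroup F] [NormedSpace ℂ F]
    (J : E →ₗ[ℂ] F) (T : E →ₗ[ℂ] ℂ) (C : ℝ) (h : ∀ x, ‖T x‖ ≤ C * ‖J x‖) :
    ∃ L : F →L[ℂ] ℂ, ∀ x, L (J x) = T x := by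
  have hk : LinearMap.ker J ≤ LinearMap.ker T := by
    intro x hx
    rw [LinearMap.mem_ker] at *
    have := h x
    rw [hx] at this
    simpa using this
  let f0 : LinearMap.range J →ₗ[ℂ] ℂ :=
    ((LinearMap.ker J).liftQ T hk).comp (J.quotKerEquivRange.symm : _ →ₗ[ℂ] _)
  have hf0 : ∀ x, f0 ⟨J x, LinearMap.mem_range_self J x⟩ = T x := by
    intro x
    have : J.quotKerEquivRange.symm ⟨J x, LinearMap.mem_range_self J x⟩ = (LinearMap.ker J).mkQ x := by
      rw [LinearEquiv.symm_apply_eq]; rfl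
    simp [f0, this]
  let f1 := f0.mkContinuous C (by
    rintro ⟨y, x, rfl⟩
    rw [hf0]; exact h x)
  obtain ⟨g, hg, -⟩ := exists_extension_norm_eq _ f1
  refine ⟨g, fun x => ?_⟩
  have := hg ⟨J x, LinearMap.mem_range_self J x⟩
  rw [this]
  exact hf0 x

section
variable {X : Type*} [TopologicalSpace X] [CompactSpace X] 

def absSet (L : C(X, ℂ) →L[ℂ] ℂ) (f : X → ℝ) : Set ℝ :=
  {r | ∃ g : C(X, ℂ), (∀ x, ‖g x‖ ≤ f x) ∧ r = ‖L g‖}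

lemma absSet_bdd (L : C(X, ℂ) →L[ℂ] ℂ) (f : C(X, ℝ)) : BddAbove (absSet L f) := by
  refine ⟨‖L‖ * ‖f‖, ?_⟩
  rintro r ⟨g, hg, rfl⟩
  refine (L.le_opNorm g).trans ?_
  gcongr
  rw [ContinuousMap.norm_le _ (norm_nonneg _)]
  intro x
  exact (hg x).trans ((le_abs_self _).trans (f.norm_coe_le_norm x))

lemma absSet_ne (L : C(X, ℂ) →L[ℂ] ℂ) (f : X → ℝ) (hf : ∀ x, 0 ≤ f x) : (absSet L f).Nonempty :=
  ⟨_, 0, by simpa using hf, rfl⟩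

lemma abs_unit (z : ℂ) : ∃ u : ℂ, ‖u‖ = 1 ∧ u * z = ‖z‖ := by
  by_cases h : z = 0
  · exact ⟨1, by simp, by simp [h]⟩
  · refine ⟨‖z‖ / z, by simp [h], by field_simp⟩

lemma absSup_add (L : C(X, ℂ) →L[ℂ] ℂ) (f1 f2 : C(X, ℝ)) (h1 : ∀ x, 0 ≤ f1 x) (h2 : ∀ x, 0 ≤ f2 x) :
    sSup (absSet L (f1 + f2 : C(X, ℝ))) = sSup (absSet L f1) + sSup (absSet L f2) := by
  apply le_antisymm
  · apply csSup_le (absSet_ne L _ (fun x => by simpa using add_nonneg (h1 x) (h2 x)))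
    rintro r ⟨g, hg, rfl⟩
    have key : ∀ ε : ℝ, 0 < ε → ‖L g‖ ≤ sSup (absSet L f1) + sSup (absSet L f2) + ‖L‖ * ε := by
      intro ε hε
      have hp : ∀ x, 0 < f1 x + f2 x + ε := fun x => by linarith [h1 x, h2 x]
      have hpc : ∀ x, ((f1 x : ℂ) + f2 x + ε) ≠ 0 := fun x => by
        exact_mod_cast (hp x).ne'
      let mk : C(X, ℝ) → C(X, ℂ) := fun k =>
        ⟨fun x => g x * ((k x : ℂ) / ((f1 x : ℂ) + f2 x + ε)), by
          refine g.continuous.mul (Continuous.div (by fun_prop) (by fun_prop) hpc)⟩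
      have hn : ∀ k : C(X, ℝ), (∀ x, 0 ≤ k x) → ∀ x, ‖mk k x‖ ≤ k x := by
        intro k hk x
        have e : ((f1 x : ℂ) + f2 x + ε) = ((f1 x + f2 x + ε : ℝ) : ℂ) := by push_cast; rfl
        have : ‖mk k x‖ = ‖g x‖ * (k x / (f1 x + f2 x + ε)) := by
          simp only [mk, ContinuousMap.coe_mk, e, norm_mul, norm_div, Complex.norm_real,
            Real.norm_of_nonneg (hk x), Real.norm_of_nonneg (hp x).le]
        rw [this, mul_div_assoc', div_le_iff₀ (hp x), mul_comm]
        apply mul_le_mul_of_nonneg_left _ (hk x)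
        have := hg x
        simp at this
        linarith
      have hsum : g = mk f1 + mk f2 + mk (ContinuousMap.const X ε) := by
        ext x
        simp only [mk, ContinuousMap.add_apply, ContinuousMap.coe_mk, ContinuousMap.const_apply]
        have := hpc x
        field_simp
      have b1 : ‖L (mk f1)‖ ≤ sSup (absSet L f1) := le_csSup (absSet_bdd L f1) ⟨_, hn f1 h1, rfl⟩
      have b2 : ‖L (mk f2)‖ ≤ sSup (absSet L f2) := le_csSup (absSet_bdd L f2) ⟨_, hn f2 h2, rfl⟩
      have b3 : ‖L (mk (ContinuousMap.const X ε))‖ ≤ ‖L‖ * ε := by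
        refine (L.le_opNorm _).trans ?_
        gcongr
        rw [ContinuousMap.norm_le _ hε.le]
        exact hn _ (fun _ => hε.le)
      calc ‖L g‖ = ‖L (mk f1) + L (mk f2) + L (mk (ContinuousMap.const X ε))‖ := by
            rw [← map_add, ← map_add, ← hsum]
        _ ≤ _ := (norm_add₃_le).trans (by gcongr)
    refine le_of_forall_pos_le_add fun ε hε => ?_
    refine (key (ε / (‖L‖ + 1)) (by positivity)).trans ?_
    gcongr
    rw [mul_div_assoc', div_le_iff₀ (by positivity)]
    nlinarith [norm_nonneg L]
  · rw [← le_sub_iff_add_le]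
    apply csSup_le (absSet_ne L _ h1)
    rintro r1 ⟨g1, hg1, rfl⟩
    rw [le_sub_iff_add_le, ← le_sub_iff_add_le']
    apply csSup_le (absSet_ne L _ h2)
    rintro r2 ⟨g2, hg2, rfl⟩
    rw [le_sub_iff_add_le']
    obtain ⟨u1, hu1, e1⟩ := abs_unit (L g1)
    obtain ⟨u2, hu2, e2⟩ := abs_unit (L g2)
    apply le_csSup (absSet_bdd L _)
    refine ⟨u1 • g1 + u2 • g2, fun x => ?_, ?_⟩
    · simp only [ContinuousMap.add_apply, ContinuousMap.smul_apply]
      refine (norm_add_le _ _).trans ?_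
      rw [norm_smul, norm_smul, hu1, hu2, one_mul, one_mul]
      exact add_le_add (hg1 x) (hg2 x)
    · rw [map_add, map_smul, map_smul, smul_eq_mul, smul_eq_mul, e1, e2, ← Complex.ofReal_add,
        Complex.norm_real, Real.norm_of_nonneg (by positivity)]

lemma absSup_smul (L : C(X, ℂ) →L[ℂ] ℂ) (f : C(X, ℝ)) (h : ∀ x, 0 ≤ f x) (c : ℝ) (hc : 0 ≤ c) :
    sSup (absSet L (c • f : C(X, ℝ))) = c * sSup (absSet L f) := by
  have hle : ∀ (f : C(X, ℝ)) (_ : ∀ x, 0 ≤ f x) (c : ℝ) (_ : 0 < c), 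
     c * sSup (absSet L f) ≤ sSup (absSet L (c • f : C(X, ℝ))) := by
    intro f h c hc
    rw [← le_div_iff₀' hc]
    apply csSup_le (absSet_ne L _ h)
    rintro r ⟨g, hg, rfl⟩
    rw [le_div_iff₀' hc]
    apply le_csSup (absSet_bdd L _)
    refine ⟨(c : ℂ) • g, fun x => ?_, ?_⟩
    · have e : ‖((c : ℂ) • g) x‖ = c * ‖g x‖ := by
        rw [ContinuousMap.smul_apply, norm_smul, Complex.norm_real, Real.norm_of_nonneg hc.le]
      rw [e]
      exact mul_le_mul_of_nonneg_left (hg x) hc.le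
    · rw [map_smul, norm_smul, Complex.norm_real, Real.norm_of_nonneg hc.le]
  rcases hc.eq_or_lt with rfl | hc
  · rw [zero_mul]
    apply le_antisymm
    · apply csSup_le (absSet_ne L _ (fun x => by simp))
      rintro r ⟨g, hg, rfl⟩
      have : g = 0 := by
        ext x; have := hg x; simpa using this
      simp [this]
    · apply le_csSup (absSet_bdd L _)
      exact ⟨0, by simp, by simp⟩
  · apply le_antisymm _ (hle f h c hc)
    have := hle (c • f) (fun x => by simpa using mul_nonneg hc.le (h x)) c⁻¹ (by positivity)
    rw [smul_smul, inv_mul_cancel₀ hc.ne', one_smul] at this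
    rwa [inv_mul_le_iff₀ hc] at this

def toR (f : C_c(X, ℝ≥0)) : C(X, ℝ) := ⟨fun x => (f x : ℝ), by fun_prop⟩

lemma absSup_nonneg (L : C(X, ℂ) →L[ℂ] ℂ) (f : X → ℝ) : 0 ≤ sSup (absSet L f) :=
  Real.sSup_nonneg (by rintro r ⟨g, -, rfl⟩; positivity)

def absFun (L : C(X, ℂ) →L[ℂ] ℂ) : C_c(X, ℝ≥0) →ₗ[ℝ≥0] ℝ≥0 where
  toFun f := ⟨sSup (absSet L (toR f)), absSup_nonneg _ _⟩
  map_add' f g := by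
    apply NNReal.eq
    change sSup (absSet L (toR (f + g))) = sSup (absSet L (toR f)) + sSup (absSet L (toR g))
    rw [← absSup_add L _ _ (fun x => by simp [toR]) (fun x => by simp [toR])]
    congr 2
  map_smul' c f := by
    apply NNReal.eq
    change sSup (absSet L (toR (c • f))) = (c : ℝ) * sSup (absSet L (toR f))
    rw [← absSup_smul L _ (fun x => by simp [toR]) c c.2]
    congr 2

end

lemma riesz_complex {X : Type*} [TopologicalSpace X] [CompactSpace X] [T2Space X]
    [MeasurableSpace X] [BorelSpace X] [SecondCountableTopology X]
    (L : C(X, ℂ) →L[ℂ] ℂ) : ∃ (ν : Measure X) (w : X → ℂ), IsFiniteMeasure ν ∧ Measurable w ∧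
      (∀ x, ‖w x‖ = 1) ∧ ∀ f : C(X, ℂ), L f = ∫ x, f x * w x ∂ν := by
  set μ := NNRealRMK.rieszMeasure (absFun L) with hμ
  have : IsFiniteMeasure μ := inferInstance
  have hb : ∀ g : C(X, ℂ), ‖L g‖ ≤ ∫ x, ‖g x‖ ∂μ := by
    intro g
    let f : C_c(X, ℝ≥0) := ⟨⟨fun x => ‖g x‖₊, by fun_prop⟩, HasCompactSupport.of_compactSpace _⟩
    have := NNRealRMK.integral_rieszMeasure (absFun L) f
    have e : ∫ x, ‖g x‖ ∂μ = ∫ x, (f x : ℝ) ∂μ := rfl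
    rw [e, this]
    exact le_csSup (absSet_bdd L (toR f)) ⟨g, fun x => le_rfl, rfl⟩
  obtain ⟨Ltwo, hLtwo⟩ := hb_factor (ContinuousMap.toLp (E := ℂ) 2 μ ℂ : C(X, ℂ) →ₗ[ℂ] Lp ℂ 2 μ)
    (L : C(X, ℂ) →ₗ[ℂ] ℂ) ((μ Set.univ).toReal ^ (1/2 : ℝ)) (by
      intro g
      refine (hb g).trans ?_
      have hg : MemLp g 2 μ := (ContinuousMap.toLp (E := ℂ) 2 μ ℂ g).2 |> fun h => by
        have := Lp.memLp (ContinuousMap.toLp (E := ℂ) 2 μ ℂ g)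
        exact this.ae_eq (ContinuousMap.coeFn_toLp μ g)
      have h1 := eLpNorm_le_eLpNorm_mul_rpow_measure_univ (p := 1) (q := 2) (by norm_num) hg.1
      have h2 : ‖(ContinuousMap.toLp (E := ℂ) 2 μ ℂ) g‖ = (eLpNorm g 2 μ).toReal := by
        rw [Lp.norm_def, eLpNorm_congr_ae (ContinuousMap.coeFn_toLp μ g)]
      have h3 : ∫ x, ‖g x‖ ∂μ = (eLpNorm g 1 μ).toReal := by
        rw [eLpNorm_one_eq_lintegral_enorm, integral_norm_eq_lintegral_enorm hg.1]
      change _ ≤ _ * ‖(ContinuousMap.toLp (E := ℂ) 2 μ ℂ) g‖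
      rw [h2, h3, ENNReal.toReal_rpow, mul_comm, ← ENNReal.toReal_mul]
      apply ENNReal.toReal_mono
      · exact ENNReal.mul_ne_top hg.2.ne (ENNReal.rpow_ne_top_of_nonneg (by norm_num) (measure_ne_top _ _))
      · convert h1 using 3
        norm_num)
  set k := (InnerProductSpace.toDual ℂ (Lp ℂ 2 μ)).symm Ltwo with hk
  have hLk : ∀ f : C(X, ℂ), L f = ∫ x, f x * (starRingEnd ℂ) (k x) ∂μ := by
    intro f
    have h1 : L f = Ltwo (ContinuousMap.toLp (E := ℂ) 2 μ ℂ f) := (hLtwo f).symm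
    rw [h1, ← InnerProductSpace.toDual_symm_apply, MeasureTheory.L2.inner_def]
    apply integral_congr_ae
    filter_upwards [ContinuousMap.coeFn_toLp (𝕜 := ℂ) (p := 2) μ f] with x hx
    rw [hx]; simp [hk]
  set h : X → ℂ := fun x => (starRingEnd ℂ) (k x) with hh
  have hmeas : Measurable h := by
    exact Complex.continuous_conj.measurable.comp (Lp.stronglyMeasurable k).measurable
  have hIntg : Integrable h μ := by
    have : Integrable k μ := (Lp.memLp k).integrable (by norm_num)
    exact (Complex.conjLIE.toLinearIsometry.toContinuousLinearMap.integrable_comp this)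
  let w : X → ℂ := fun x => if h x = 0 then 1 else h x / ‖h x‖
  refine ⟨μ.withDensity (fun x => (‖h x‖₊ : ℝ≥0∞)), w, ?_, ?_, ?_, ?_⟩
  · apply isFiniteMeasure_withDensity
    exact hIntg.2.ne
  · exact Measurable.ite (hmeas (measurableSet_singleton 0)) measurable_const (by fun_prop)
  · intro x
    by_cases hx : h x = 0 <;> simp [w, hx]
  · intro f
    rw [hLk, integral_withDensity_eq_integral_smul (by fun_prop)]
    congr 1; ext x
    by_cases hx : h x = 0 
    · simp only [hx]; change f x * h x = _; simp [hx]
    · simp only [w, hx, if_false]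
      change f x * h x = _
      rw [NNReal.smul_def, coe_nnnorm, Complex.real_smul]
      have : (‖h x‖ : ℂ) ≠ 0 := by simpa using hx
      field_simp

end

section
open scoped SchwartzMap ContDiff Topology Manifold

/-- fixed bump function -/
def bmp (r R : ℝ) (hr : 0 < r) (hR : r < R) : ContDiffBump (0 : ℝ × ℝ) := ⟨r, R, hr, hR⟩

/-- Complex valued bump. -/
def cb (f : ContDiffBump (0 : ℝ × ℝ)) : ℝ × ℝ → ℂ := fun x => ((f x : ℝ) : ℂ)

lemma cb_contDiff (f : ContDiffBump (0 : ℝ × ℝ)) : ContDiff ℝ ∞ (cb f) :=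
  Complex.ofRealCLM.contDiff.comp f.contDiff

lemma cb_tsupport (f : ContDiffBump (0 : ℝ × ℝ)) : tsupport (cb f) = Metric.closedBall 0 f.rOut := by
  rw [← f.tsupport_eq]
  unfold tsupport
  congr 1
  ext x
  simp [cb]

lemma cb_compact (f : ContDiffBump (0 : ℝ × ℝ)) : HasCompactSupport (cb f) := by
  unfold HasCompactSupport
  rw [cb_tsupport]
  exact isCompact_closedBall _ _

/-- multiplication of a Schwartz function by a smooth compactly supported function -/
def smulS (g : ℝ × ℝ → ℂ) (hg : HasCompactSupport g) (hs : ContDiff ℝ ∞ g)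
    (ψ : 𝓢(ℝ × ℝ, ℂ)) : 𝓢(ℝ × ℝ, ℂ) :=
  (show HasCompactSupport (fun x => g x * ψ x) from hg.mul_right).toSchwartzMap
    (hs.mul (ψ.smooth ⊤))

lemma smulS_apply (g : ℝ × ℝ → ℂ) (hg : HasCompactSupport g) (hs : ContDiff ℝ ∞ g)
    (ψ : 𝓢(ℝ × ℝ, ℂ)) (x) : smulS g hg hs ψ x = g x * ψ x := rfl

lemma dens_bound (χ : 𝓢(ℝ × ℝ, ℂ)) (ψ : 𝓢(ℝ × ℝ, ℂ)) (k n : ℕ) :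
    ∃ C : ℝ, 0 ≤ C ∧ ∀ N : ℕ, ∀ x : ℝ × ℝ, (N + 1 : ℝ) ≤ ‖x‖ →
      ‖x‖ ^ k * ‖iteratedFDeriv ℝ n (fun y => χ ((N + 1 : ℝ)⁻¹ • y) * ψ y - ψ y) x‖
        ≤ C * (N + 1 : ℝ)⁻¹ := by
  refine ⟨∑ i ∈ Finset.range (n + 1), (n.choose i : ℝ) * SchwartzMap.seminorm ℝ 0 i χ *
    SchwartzMap.seminorm ℝ (k + 1) (n - i) ψ + SchwartzMap.seminorm ℝ (k + 1) n ψ, by positivity, ?_⟩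
  intro N x hx
  have hN : (0 : ℝ) < N + 1 := by positivity
  have hχs : ContDiff ℝ ∞ (fun y => χ ((N + 1 : ℝ)⁻¹ • y)) :=
    (χ.smooth ⊤).comp (contDiff_const_smul _)
  have hψs : ContDiff ℝ ∞ (fun y => ψ y) := ψ.smooth ⊤
  have hx0 : 0 < ‖x‖ := hN.trans_le hx
  have key : ‖x‖ ^ k = ‖x‖ ^ (k + 1) * ‖x‖⁻¹ := by rw [pow_succ, mul_assoc, mul_inv_cancel₀ hx0.ne', mul_one]
  have hle : ‖x‖⁻¹ ≤ (N + 1 : ℝ)⁻¹ := inv_anti₀ hN hx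
  have h1 : iteratedFDeriv ℝ n (fun y => χ ((N + 1 : ℝ)⁻¹ • y) * ψ y - ψ y) x
      = iteratedFDeriv ℝ n (fun y => χ ((N + 1 : ℝ)⁻¹ • y) * ψ y) x - iteratedFDeriv ℝ n ψ x := by
    have := iteratedFDeriv_sub_apply (𝕜 := ℝ) (x := x) (i := n)
      (f := fun y => χ ((N + 1 : ℝ)⁻¹ • y) * ψ y) (g := fun y => ψ y)
      ((hχs.mul hψs).of_le (by exact_mod_cast le_top)).contDiffAt
      (hψs.of_le (by exact_mod_cast le_top)).contDiffAt
    exact this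
  have h2 := norm_iteratedFDeriv_mul_le (𝕜 := ℝ) (N := ∞) hχs hψs x (n := n) (by exact_mod_cast le_top)
  have h3 : ∀ i, ‖iteratedFDeriv ℝ i (fun y => χ ((N + 1 : ℝ)⁻¹ • y)) x‖
      ≤ SchwartzMap.seminorm ℝ 0 i χ := by
    intro i
    have := iteratedFDeriv_comp_const_smul (𝕜 := ℝ) (i := i) (f := χ) ((N + 1 : ℝ)⁻¹)
      ((χ.smooth ⊤).of_le (by exact_mod_cast le_top))
    rw [this]
    rw [norm_smul]
    have h4 := SchwartzMap.le_seminorm ℝ 0 i χ ((N + 1 : ℝ)⁻¹ • x)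
    rw [pow_zero, one_mul] at h4
    refine le_trans (mul_le_of_le_one_left (norm_nonneg _) ?_) h4
    rw [norm_pow, norm_inv]
    apply pow_le_one₀ (by positivity)
    apply inv_le_one_of_one_le₀
    rw [Real.norm_eq_abs, abs_of_pos hN]; linarith [Nat.cast_nonneg (α := ℝ) N]
  rw [h1, key]
  calc ‖x‖ ^ (k + 1) * ‖x‖⁻¹ * ‖_ - iteratedFDeriv ℝ n ψ x‖
      ≤ ‖x‖ ^ (k + 1) * (N + 1 : ℝ)⁻¹ * (∑ i ∈ Finset.range (n + 1), (n.choose i : ℝ) *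
        SchwartzMap.seminorm ℝ 0 i χ * ‖iteratedFDeriv ℝ (n - i) ψ x‖ + ‖iteratedFDeriv ℝ n ψ x‖) := by
        gcongr
        refine (norm_sub_le _ _).trans ?_
        gcongr
        refine h2.trans ?_
        gcongr
        exact h3 _
    _ = (∑ i ∈ Finset.range (n + 1), (n.choose i : ℝ) *
        SchwartzMap.seminorm ℝ 0 i χ * (‖x‖ ^ (k + 1) * ‖iteratedFDeriv ℝ (n - i) ψ x‖)
          + ‖x‖ ^ (k + 1) * ‖iteratedFDeriv ℝ n ψ x‖) * (N + 1 : ℝ)⁻¹ := by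
        rw [mul_right_comm, mul_add, Finset.mul_sum]
        congr 2
        apply Finset.sum_congr rfl; intros; ring
    _ ≤ _ := by
        gcongr
        · exact SchwartzMap.le_seminorm ℝ (k+1) _ ψ x
        · exact SchwartzMap.le_seminorm ℝ (k+1) _ ψ x

lemma dens (ψ : 𝓢(ℝ × ℝ, ℂ)) : ∃ u : ℕ → 𝓢(ℝ × ℝ, ℂ),
    Filter.Tendsto u Filter.atTop (𝓝 ψ) ∧ ∀ N, HasCompactSupport (u N) ∧ tsupport (u N) ⊆ tsupport ψ := by
  let f := bmp 1 2 one_pos one_lt_two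
  let χ : 𝓢(ℝ × ℝ, ℂ) := (cb_compact f).toSchwartzMap (cb_contDiff f)
  have hχ : ∀ x, χ x = cb f x := fun _ => rfl
  let g : ℕ → ℝ × ℝ → ℂ := fun N y => cb f ((N + 1 : ℝ)⁻¹ • y)
  have hgc : ∀ N, HasCompactSupport (g N) := fun N =>
    (cb_compact f).comp_homeomorph (Homeomorph.smulOfNeZero ((N + 1 : ℝ)⁻¹) (by positivity))
  have hgs : ∀ N, ContDiff ℝ ∞ (g N) := fun N => (cb_contDiff f).comp (contDiff_const_smul _)
  refine ⟨fun N => smulS (g N) (hgc N) (hgs N) ψ, ?_, fun N => ⟨(hgc N).mul_right, ?_⟩⟩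
  · rw [(schwartz_withSeminorms ℝ (ℝ × ℝ) ℂ).tendsto_nhds]
    rintro ⟨k, n⟩ ε hε
    obtain ⟨C, hC, hb⟩ := dens_bound χ ψ k n
    have hlim : Filter.Tendsto (fun N : ℕ => C * (N + 1 : ℝ)⁻¹) Filter.atTop (𝓝 (C * 0)) :=
      (tendsto_one_div_add_atTop_nhds_zero_nat.congr (by intro; simp)).const_mul C
    rw [mul_zero] at hlim
    filter_upwards [hlim.eventually_lt_const hε] with N hN
    refine lt_of_le_of_lt ?_ hN
    refine SchwartzMap.seminorm_le_bound ℝ k n _ (by positivity) ?_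
    intro x
    have hf : ((smulS (g N) (hgc N) (hgs N) ψ - ψ : 𝓢(ℝ × ℝ, ℂ)) : ℝ × ℝ → ℂ)
      = fun y => χ ((N + 1 : ℝ)⁻¹ • y) * ψ y - ψ y := rfl
    rw [hf]
    have hNp : (0 : ℝ) < N + 1 := by positivity
    by_cases hx : (N + 1 : ℝ) ≤ ‖x‖
    · exact hb N x hx
    · have : (fun y => χ ((N + 1 : ℝ)⁻¹ • y) * ψ y - ψ y) =ᶠ[𝓝 x] fun _ => (0 : ℂ) := by
        have ho : IsOpen {y : ℝ × ℝ | ‖y‖ < N + 1} := isOpen_lt continuous_norm continuous_const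
        filter_upwards [ho.mem_nhds (not_le.1 hx)] with y hy
        have : f ((N + 1 : ℝ)⁻¹ • y) = 1 := by
          apply f.one_of_mem_closedBall
          rw [mem_closedBall_zero_iff, norm_smul, norm_inv, Real.norm_eq_abs, abs_of_pos hNp]
          show _ ≤ (1 : ℝ)
          rw [inv_mul_le_one₀ hNp]
          exact le_of_lt hy
        rw [hχ, cb, this]; simp
      rw [(this.iteratedFDeriv ℝ n).eq_of_nhds]
      simp only [iteratedFDeriv_fun_zero]
      simp
      positivity
  · apply closure_mono
    intro x hx
    rw [Function.mem_support] at hx ⊢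
    intro h; apply hx
    show g N x * ψ x = 0
    rw [h, mul_zero]

lemma supp_compact (T' : TDist2) (Q : Set (ℝ × ℝ)) (hsupp : distSupport2 T' ⊆ Q)
    (ψ : 𝓢(ℝ × ℝ, ℂ)) (hc : HasCompactSupport ψ) (hd : Disjoint (tsupport ψ) Q) : T' ψ = 0 := by
  classical
  have hcov : ∀ x : tsupport ψ, ∃ U : Set (ℝ × ℝ), IsOpen U ∧ (x : ℝ × ℝ) ∈ U ∧
      ∀ φ : 𝓢(ℝ × ℝ, ℂ), tsupport φ ⊆ U → T' φ = 0 := by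
    intro x
    have hx : (x : ℝ × ℝ) ∉ distSupport2 T' := fun h =>
      Set.disjoint_left.1 hd x.2 (hsupp h)
    unfold distSupport2 at hx
    rw [Set.notMem_compl_iff] at hx
    obtain ⟨U, ⟨h1, h2⟩, h3⟩ := hx
    exact ⟨U, h1, h3, h2⟩
  choose U hUo hxU hU using hcov
  obtain ⟨t, ht⟩ := hc.isCompact.elim_finite_subcover U hUo
    (fun x hx => Set.mem_iUnion.2 ⟨⟨x, hx⟩, hxU _⟩)
  obtain ⟨f, hf⟩ := SmoothPartitionOfUnity.exists_isSubordinate 𝓘(ℝ, ℝ × ℝ)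
    (isClosed_tsupport ψ) (fun i : t => U i) (fun i => hUo i)
    (by
      refine ht.trans ?_
      intro x hx
      simp only [Set.mem_iUnion] at hx ⊢
      obtain ⟨i, hi, h⟩ := hx
      exact ⟨⟨i, hi⟩, h⟩)
  have hfs : ∀ i, ContDiff ℝ ∞ (fun x => ((f i x : ℝ) : ℂ) * ψ x) := fun i =>
    (Complex.ofRealCLM.contDiff.comp (contMDiff_iff_contDiff.1 (f i).contMDiff)).mul (ψ.smooth ⊤)
  have hfc : ∀ i, HasCompactSupport (fun x => ((f i x : ℝ) : ℂ) * ψ x) := fun i => hc.mul_left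
  have hsum : ψ = ∑ i, (hfc i).toSchwartzMap (hfs i) := by
    ext x
    rw [sum_apply]
    show ψ x = ∑ i, ((f i x : ℝ) : ℂ) * ψ x
    rw [← Finset.sum_mul]
    by_cases hx : x ∈ tsupport ψ
    · have := f.sum_eq_one hx
      rw [finsum_eq_sum_of_fintype] at this
      rw [← Complex.ofReal_sum, this]; simp
    · rw [image_eq_zero_of_notMem_tsupport hx]; simp
  rw [hsum, map_sum]
  apply Finset.sum_eq_zero
  intro i _
  apply hU i
  refine subset_trans ?_ (hf i)
  apply closure_mono
  intro x hx
  rw [Function.mem_support] at hx ⊢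
  intro h; apply hx
  show ((f i x : ℝ) : ℂ) * ψ x = 0
  rw [h]; simp

/-- A distribution vanishes on Schwartz functions whose closed support misses the support. -/
lemma supp_zero (T' : TDist2) (Q : Set (ℝ × ℝ)) (hsupp : distSupport2 T' ⊆ Q)
    (ψ : 𝓢(ℝ × ℝ, ℂ)) (hd : Disjoint (tsupport ψ) Q) : T' ψ = 0 := by
  obtain ⟨u, hu, h⟩ := dens ψ
  have h1 := (T'.continuous.tendsto ψ).comp hu
  have h2 : ∀ N, T' (u N) = 0 := fun N =>
    supp_compact T' Q hsupp _ (h N).1 (hd.mono_left (h N).2)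
  have h3 : (T' ∘ u) = fun _ => 0 := funext h2
  rw [h3] at h1
  exact (tendsto_nhds_unique h1 tendsto_const_nhds)

end

section
open scoped SchwartzMap ContDiff Topology

lemma pd1_smooth {f : ℝ × ℝ → ℂ} (hf : ContDiff ℝ ∞ f) : ContDiff ℝ ∞ (pd1 f) := by
  unfold pd1
  exact (hf.fderiv_right (m := ∞) (by simp)).clm_apply contDiff_const

lemma pd2_smooth {f : ℝ × ℝ → ℂ} (hf : ContDiff ℝ ∞ f) : ContDiff ℝ ∞ (pd2 f) := by
  unfold pd2
  exact (hf.fderiv_right (m := ∞) (by simp)).clm_apply contDiff_const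

lemma pd1_it_smooth {f : ℝ × ℝ → ℂ} (hf : ContDiff ℝ ∞ f) (n : ℕ) : ContDiff ℝ ∞ (pd1^[n] f) := by
  induction n with
  | zero => exact hf
  | succ n ih => rw [Function.iterate_succ_apply']; exact pd1_smooth ih

lemma pd2_it_smooth {f : ℝ × ℝ → ℂ} (hf : ContDiff ℝ ∞ f) (n : ℕ) : ContDiff ℝ ∞ (pd2^[n] f) := by
  induction n with
  | zero => exact hf
  | succ n ih => rw [Function.iterate_succ_apply']; exact pd2_smooth ih

lemma mderiv2_smooth {f : ℝ × ℝ → ℂ} (hf : ContDiff ℝ ∞ f) (α : ℕ × ℕ) :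
    ContDiff ℝ ∞ (mderiv2 α f) := pd1_it_smooth (pd2_it_smooth hf _) _

lemma smooth_diff {f : ℝ × ℝ → ℂ} (hf : ContDiff ℝ ∞ f) : Differentiable ℝ f :=
  hf.differentiable (by simp)

lemma pd1_add {f g : ℝ × ℝ → ℂ} (hf : ContDiff ℝ ∞ f) (hg : ContDiff ℝ ∞ g) :
    pd1 (f + g) = pd1 f + pd1 g := by
  ext x; simp [pd1, fderiv_add (smooth_diff hf x) (smooth_diff hg x)]

lemma pd2_add {f g : ℝ × ℝ → ℂ} (hf : ContDiff ℝ ∞ f) (hg : ContDiff ℝ ∞ g) :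
    pd2 (f + g) = pd2 f + pd2 g := by
  ext x; simp [pd2, fderiv_add (smooth_diff hf x) (smooth_diff hg x)]

lemma pd1_mul {f g : ℝ × ℝ → ℂ} (hf : ContDiff ℝ ∞ f) (hg : ContDiff ℝ ∞ g) :
    pd1 (f * g) = pd1 f * g + f * pd1 g := by
  ext x; simp [pd1, fderiv_mul (smooth_diff hf x) (smooth_diff hg x)]; ring

lemma pd2_mul {f g : ℝ × ℝ → ℂ} (hf : ContDiff ℝ ∞ f) (hg : ContDiff ℝ ∞ g) :
    pd2 (f * g) = pd2 f * g + f * pd2 g := by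
  ext x; simp [pd2, fderiv_mul (smooth_diff hf x) (smooth_diff hg x)]; ring

lemma pd1_smul {f : ℝ × ℝ → ℂ} (hf : ContDiff ℝ ∞ f) (c : ℂ) :
    pd1 (c • f) = c • pd1 f := by
  ext x; simp [pd1, fderiv_const_smul (smooth_diff hf x)]

lemma pd2_smul {f : ℝ × ℝ → ℂ} (hf : ContDiff ℝ ∞ f) (c : ℂ) :
    pd2 (c • f) = c • pd2 f := by
  ext x; simp [pd2, fderiv_const_smul (smooth_diff hf x)]

lemma mderiv2_add {f g : ℝ × ℝ → ℂ} (hf : ContDiff ℝ ∞ f) (hg : ContDiff ℝ ∞ g) (α : ℕ × ℕ) :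
    mderiv2 α (f + g) = mderiv2 α f + mderiv2 α g := by
  unfold mderiv2
  have h2 : ∀ n, pd2^[n] (f + g) = pd2^[n] f + pd2^[n] g := by
    intro n
    induction n with
    | zero => rfl
    | succ n ih =>
      simp only [Function.iterate_succ_apply', ih]
      exact pd2_add (pd2_it_smooth hf n) (pd2_it_smooth hg n)
  rw [h2]
  generalize α.1 = n
  induction n with
  | zero => rfl
  | succ n ih =>
    simp only [Function.iterate_succ_apply', ih]
    exact pd1_add (pd1_it_smooth (pd2_it_smooth hf _) n) (pd1_it_smooth (pd2_it_smooth hg _) n)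

lemma mderiv2_smul {f : ℝ × ℝ → ℂ} (hf : ContDiff ℝ ∞ f) (c : ℂ) (α : ℕ × ℕ) :
    mderiv2 α (c • f) = c • mderiv2 α f := by
  unfold mderiv2
  have h2 : ∀ n, pd2^[n] (c • f) = c • pd2^[n] f := by
    intro n
    induction n with
    | zero => rfl
    | succ n ih =>
      simp only [Function.iterate_succ_apply', ih]
      exact pd2_smul (pd2_it_smooth hf n) c
  rw [h2]
  generalize α.1 = n
  induction n with
  | zero => rfl
  | succ n ih =>
    simp only [Function.iterate_succ_apply', ih]
    exact pd1_smul (pd1_it_smooth (pd2_it_smooth hf _) n) c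

lemma mderiv2_congr {f g : ℝ × ℝ → ℂ} {x : ℝ × ℝ} (h : f =ᶠ[𝓝 x] g) (α : ℕ × ℕ) :
    mderiv2 α f =ᶠ[𝓝 x] mderiv2 α g := by
  unfold mderiv2
  have h1 : ∀ {f g : ℝ × ℝ → ℂ}, f =ᶠ[𝓝 x] g → pd1 f =ᶠ[𝓝 x] pd1 g := by
    intro f g h
    filter_upwards [h.fderiv (𝕜 := ℝ)] with y hy
    simp [pd1, hy]
  have h2 : ∀ {f g : ℝ × ℝ → ℂ}, f =ᶠ[𝓝 x] g → pd2 f =ᶠ[𝓝 x] pd2 g := by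
    intro f g h
    filter_upwards [h.fderiv (𝕜 := ℝ)] with y hy
    simp [pd2, hy]
  have h3 : ∀ n, pd2^[n] f =ᶠ[𝓝 x] pd2^[n] g := by
    intro n
    induction n with
    | zero => exact h
    | succ n ih => simp only [Function.iterate_succ_apply']; exact h2 ih
  generalize α.1 = n
  induction n with
  | zero => exact h3 _
  | succ n ih => simp only [Function.iterate_succ_apply']; exact h1 ih

lemma pd_comm {f : ℝ × ℝ → ℂ} (hf : ContDiff ℝ ∞ f) : pd2 (pd1 f) = pd1 (pd2 f) := by
  ext x
  have hs : IsSymmSndFDerivAt ℝ f x := (hf.contDiffAt).isSymmSndFDerivAt (by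
    simp only [minSmoothness_of_isRCLikeNormedField]; exact WithTop.coe_le_coe.2 le_top)
  have hd : DifferentiableAt ℝ (fderiv ℝ f) x :=
    (hf.fderiv_right (m := ∞) (by simp)).differentiable (by simp) x
  have h := hs (0, 1) (1, 0)
  unfold pd1 pd2
  rw [fderiv_clm_apply hd (differentiableAt_const _), fderiv_clm_apply hd (differentiableAt_const _)]
  simpa using h

lemma pd2_pd1_it {f : ℝ × ℝ → ℂ} (hf : ContDiff ℝ ∞ f) (n : ℕ) :
    pd2 (pd1^[n] f) = pd1^[n] (pd2 f) := by
  induction n with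
  | zero => rfl
  | succ n ih =>
    simp only [Function.iterate_succ_apply']
    rw [pd_comm (pd1_it_smooth hf n), ih]

lemma pd1_mderiv2 (f : ℝ × ℝ → ℂ) (a b : ℕ) :
    pd1 (mderiv2 (a, b) f) = mderiv2 (a + 1, b) f := by
  simp only [mderiv2, Function.iterate_succ_apply']

lemma pd2_mderiv2 {f : ℝ × ℝ → ℂ} (hf : ContDiff ℝ ∞ f) (a b : ℕ) :
    pd2 (mderiv2 (a, b) f) = mderiv2 (a, b + 1) f := by
  simp only [mderiv2, Function.iterate_succ_apply']
  exact pd2_pd1_it (pd2_it_smooth hf b) a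

lemma leibniz_bound (x : ℝ × ℝ) (W : ℝ) (hW : 0 ≤ W) (n : ℕ) :
    ∀ (α : ℕ × ℕ), α.1 + α.2 = n → ∀ (f g : ℝ × ℝ → ℂ) (A B : ℝ), 
    ContDiff ℝ ∞ f → ContDiff ℝ ∞ g → 0 ≤ A → 0 ≤ B →
    (∀ β : ℕ × ℕ, β.1 ≤ α.1 → β.2 ≤ α.2 → ‖mderiv2 β f x‖ ≤ A * W ^ (β.1 + β.2)) →
    (∀ β : ℕ × ℕ, β.1 ≤ α.1 → β.2 ≤ α.2 → ‖mderiv2 β g x‖ ≤ B * W ^ (β.1 + β.2)) →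
    ‖mderiv2 α (f * g) x‖ ≤ 2 ^ n * A * B * W ^ n := by
  induction n with
  | zero =>
    rintro ⟨a, b⟩ h f g A B hf hg hA hB h1 h2
    obtain rfl : a = 0 := by simp at h; omega
    obtain rfl : b = 0 := by simp at h; omega
    have h1 := h1 (0, 0) le_rfl le_rfl
    have h2 := h2 (0, 0) le_rfl le_rfl
    simp only [mderiv2, Function.iterate_zero, id] at *
    simp only [pow_zero, mul_one, one_mul, add_zero, Pi.mul_apply, norm_mul] at *
    gcongr
  | succ n ih =>
    rintro ⟨a, b⟩ h f g A B hf hg hA hB h1 h2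
    have fin : ∀ (γ : ℕ × ℕ) (f' g' : ℝ × ℝ → ℂ), γ.1 + γ.2 = n → γ.1 ≤ a → γ.2 ≤ b →
      ContDiff ℝ ∞ f' → ContDiff ℝ ∞ g' →
      (∀ β : ℕ × ℕ, β.1 ≤ γ.1 → β.2 ≤ γ.2 → ‖mderiv2 β f' x‖ ≤ A * W * W ^ (β.1 + β.2)) →
      (∀ β : ℕ × ℕ, β.1 ≤ γ.1 → β.2 ≤ γ.2 → ‖mderiv2 β g' x‖ ≤ B * W * W ^ (β.1 + β.2)) →
      ‖mderiv2 γ (f' * g + f * g') x‖ ≤ 2 ^ (n + 1) * A * B * W ^ (n + 1) := by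
      intro γ f' g' hγ hγ1 hγ2 hf' hg' hbf hbg
      rw [mderiv2_add (f := f' * g) (g := f * g') (hf'.mul hg) (hf.mul hg')]
      refine (norm_add_le _ _).trans ?_
      have e1 := ih γ hγ f' g (A * W) B hf' hg (by positivity) hB hbf
        (fun β k1 k2 => h2 β (k1.trans hγ1) (k2.trans hγ2))
      have e2 := ih γ hγ f g' A (B * W) hf hg' hA (by positivity)
        (fun β k1 k2 => h1 β (k1.trans hγ1) (k2.trans hγ2)) hbg
      refine (add_le_add e1 e2).trans (le_of_eq ?_)
      ring
    rcases b with _ | b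
    · rcases a with _ | a
      · simp at h
      · have e : mderiv2 (a + 1, 0) (f * g) = mderiv2 (a, 0) (pd1 f * g + f * pd1 g) := by
          simp only [mderiv2, Function.iterate_succ_apply, Function.iterate_zero, id]
          rw [pd1_mul hf hg]
        rw [e]
        refine fin (a, 0) _ _ (by simpa using h) (by simp) le_rfl (pd1_smooth hf) (pd1_smooth hg) ?_ ?_
        · rintro ⟨i, j⟩ k1 k2
          obtain rfl : j = 0 := by simpa using k2
          have := h1 (i + 1, 0) (by simpa using k1) le_rfl
          calc ‖mderiv2 (i, 0) (pd1 f) x‖ = ‖mderiv2 (i + 1, 0) f x‖ := rfl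
            _ ≤ _ := this
            _ = _ := by ring
        · rintro ⟨i, j⟩ k1 k2
          obtain rfl : j = 0 := by simpa using k2
          have := h2 (i + 1, 0) (by simpa using k1) le_rfl
          calc ‖mderiv2 (i, 0) (pd1 g) x‖ = ‖mderiv2 (i + 1, 0) g x‖ := rfl
            _ ≤ _ := this
            _ = _ := by ring
    · have e : mderiv2 (a, b + 1) (f * g) = mderiv2 (a, b) (pd2 f * g + f * pd2 g) := by
        simp only [mderiv2, Function.iterate_succ_apply]
        rw [pd2_mul hf hg]
      rw [e]
      refine fin (a, b) _ _ (by simp at h ⊢; omega) le_rfl (by simp) (pd2_smooth hf) (pd2_smooth hg) ?_ ?_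
      · rintro ⟨i, j⟩ k1 k2
        have := h1 (i, j + 1) k1 (by simpa using k2)
        calc ‖mderiv2 (i, j) (pd2 f) x‖ = ‖mderiv2 (i, j + 1) f x‖ := rfl
          _ ≤ _ := this
          _ = _ := by ring
      · rintro ⟨i, j⟩ k1 k2
        have := h2 (i, j + 1) k1 (by simpa using k2)
        calc ‖mderiv2 (i, j) (pd2 g) x‖ = ‖mderiv2 (i, j + 1) g x‖ := rfl
          _ ≤ _ := this
          _ = _ := by ring

/-- uniform bound of finitely many derivatives on a compact set -/
lemma exists_deriv_bound {f : ℝ × ℝ → ℂ} (hf : ContDiff ℝ ∞ f) (K : Set (ℝ × ℝ)) (hK : IsCompact K)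
    (p : ℕ) : ∃ A : ℝ, 0 ≤ A ∧ ∀ α : ℕ × ℕ, α.1 + α.2 ≤ p → ∀ x ∈ K, ‖mderiv2 α f x‖ ≤ A := by
  have h : ∀ α : ℕ × ℕ, ∃ A : ℝ, ∀ x ∈ K, ‖mderiv2 α f x‖ ≤ A := fun α =>
    hK.exists_bound_of_continuousOn (mderiv2_smooth hf α).continuous.continuousOn
  choose A hA using h
  refine ⟨∑ α ∈ Finset.range (p + 1) ×ˢ Finset.range (p + 1), |A α|,
    Finset.sum_nonneg fun _ _ => abs_nonneg _, ?_⟩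
  intro α hα x hx
  refine (hA α x hx).trans ((le_abs_self _).trans ?_)
  exact Finset.single_le_sum (f := fun α => |A α|) (fun _ _ => abs_nonneg _)
    (Finset.mem_product.2 ⟨Finset.mem_range.2 (by omega), Finset.mem_range.2 (by omega)⟩)

lemma Icc_eq_ball (c : ℝ) : Set.Icc ((-c, -c) : ℝ × ℝ) (c, c) = Metric.closedBall 0 c := by
  ext ⟨x, y⟩
  simp [Prod.norm_def, abs_le, Prod.le_def]
  tauto

lemma T_eq_of_near (T' : TDist2) (Q : Set (ℝ × ℝ)) (hsupp : distSupport2 T' ⊆ Q)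
    (φ ψ : 𝓢(ℝ × ℝ, ℂ)) (U : Set (ℝ × ℝ)) (hU : IsOpen U) (hQ : Q ⊆ U) 
    (h : ∀ x ∈ U, φ x = ψ x) : T' φ = T' ψ := by
  rw [← sub_eq_zero, ← map_sub]
  refine supp_zero T' Q hsupp _ ?_
  have : tsupport (φ - ψ) ⊆ Uᶜ := by
    apply closure_minimal _ hU.isClosed_compl
    intro x hx hxU
    apply hx
    show φ x - ψ x = 0
    rw [h x hxU, sub_self]
  exact (Set.disjoint_compl_left_iff_subset.2 hQ).mono_left this

/-- First bound, on a neighbourhood. -/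
lemma bound_A0 (T' : TDist2) (p : ℕ) (c : ℝ) (hsupp : distSupport2 T' ⊆ Metric.closedBall 0 c)
    (hord : hasOrderAtMost2 T' p) (R : ℝ) (hR : 0 < R) (hcR : c < R) :
    ∃ M : ℝ, 0 ≤ M ∧ ∀ ψ : 𝓢(ℝ × ℝ, ℂ), ∀ B : ℝ, 0 ≤ B →
      (∀ α : ℕ × ℕ, α.1 + α.2 ≤ p → ∀ x ∈ Metric.closedBall (0 : ℝ × ℝ) R, ‖mderiv2 α ψ x‖ ≤ B) →
      ‖T' ψ‖ ≤ M * B := by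
  obtain ⟨M, hM⟩ := hord (Metric.closedBall 0 R) (isCompact_closedBall _ _)
  have hm : max c 0 < R := max_lt hcR hR
  have hm0 := le_max_right c 0
  have hmc := le_max_left c 0
  let χ := bmp ((max c 0 + R) / 2) R (by linarith) (by linarith)
  obtain ⟨A, hA, hb⟩ := exists_deriv_bound (cb_contDiff χ) (Metric.closedBall 0 R) (isCompact_closedBall _ _) p
  refine ⟨|M| * (2 ^ p * A), by positivity, ?_⟩
  intro ψ B hB h
  have e : T' ψ = T' (smulS (cb χ) (cb_compact χ) (cb_contDiff χ) ψ) := by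
    symm
    refine T_eq_of_near T' _ hsupp _ _ (Metric.ball 0 ((max c 0 + R) / 2)) Metric.isOpen_ball
      (Metric.closedBall_subset_ball (by linarith)) ?_
    intro x hx
    rw [smulS_apply, cb, χ.one_of_mem_closedBall (Metric.ball_subset_closedBall hx)]
    simp
  rw [e]
  have hts : tsupport (smulS (cb χ) (cb_compact χ) (cb_contDiff χ) ψ) ⊆ Metric.closedBall 0 R := by
    have := cb_tsupport χ
    have h2 : tsupport (smulS (cb χ) (cb_compact χ) (cb_contDiff χ) ψ) ⊆ tsupport (cb χ) := by
      apply closure_mono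
      intro x hx
      rw [Function.mem_support] at hx ⊢
      intro h; apply hx
      rw [smulS_apply, h, zero_mul]
    exact h2.trans this.le
  refine (hM _ hts (2 ^ p * A * B) (by positivity) ?_).trans ?_
  · intro α hα x hx
    have := leibniz_bound x 1 zero_le_one (α.1 + α.2) α rfl (cb χ) ψ A B (cb_contDiff χ) (ψ.smooth ⊤) hA hB
      (fun β h1 h2 => by simpa using hb β (by omega) x hx) (fun β h1 h2 => by simpa using h β (by omega) x hx)
    refine this.trans ?_
    rw [one_pow, mul_one]
    gcongr
    · exact one_le_two
  · rw [mul_assoc |M|]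
    gcongr
    exact le_abs_self M

end

section
open scoped SchwartzMap ContDiff Topology

lemma fderiv_bound_pd (h : ℝ × ℝ → ℂ) (z : ℝ × ℝ) (D : ℝ)
    (h1 : ‖pd1 h z‖ ≤ D) (h2 : ‖pd2 h z‖ ≤ D) : ‖fderiv ℝ h z‖ ≤ 2 * D := by
  have hD : 0 ≤ D := (norm_nonneg _).trans h1
  refine ContinuousLinearMap.opNorm_le_bound _ (by positivity) ?_
  rintro ⟨a, b⟩
  have e : ((a, b) : ℝ × ℝ) = a • ((1, 0) : ℝ × ℝ) + b • ((0, 1) : ℝ × ℝ) := by simp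
  have e2 : fderiv ℝ h z (a, b) = a • pd1 h z + b • pd2 h z := by
    rw [e, map_add, map_smul, map_smul]; rfl
  rw [e2]
  refine (norm_add_le _ _).trans ?_
  rw [norm_smul, norm_smul]
  have ha : ‖a‖ ≤ ‖((a, b) : ℝ × ℝ)‖ := norm_fst_le (a, b)
  have hb : ‖b‖ ≤ ‖((a, b) : ℝ × ℝ)‖ := norm_snd_le (a, b)
  calc ‖a‖ * ‖pd1 h z‖ + ‖b‖ * ‖pd2 h z‖ ≤ ‖((a, b) : ℝ × ℝ)‖ * D + ‖((a, b) : ℝ × ℝ)‖ * D := by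
        gcongr
    _ = _ := by ring

lemma flat_bound {f : ℝ × ℝ → ℂ} (hf : ContDiff ℝ ∞ f) (p : ℕ) (C : ℝ)
    (hC : ∀ α : ℕ × ℕ, α.1 + α.2 ≤ p + 1 → ∀ x ∈ Metric.closedBall (0 : ℝ × ℝ) 1, ‖mderiv2 α f x‖ ≤ C)
    (h0 : ∀ α : ℕ × ℕ, α.1 + α.2 ≤ p → mderiv2 α f 0 = 0) (j : ℕ) :
    ∀ a b : ℕ, a + b + j = p + 1 → ∀ x ∈ Metric.closedBall (0 : ℝ × ℝ) 1,
      ‖mderiv2 (a, b) f x‖ ≤ 2 ^ j * C * ‖x‖ ^ j := by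
  induction j with
  | zero =>
    intro a b hab x hx
    simpa using hC (a, b) (by simpa using hab.le) x hx
  | succ j ih =>
    intro a b hab x hx
    have hx1 : ‖x‖ ≤ 1 := by simpa using hx
    have hd := smooth_diff (mderiv2_smooth hf (a, b))
    have hC0 : 0 ≤ C := (norm_nonneg _).trans (hC (0, 0) (by simp) 0 (by simp))
    have := (convex_closedBall (0 : ℝ × ℝ) ‖x‖).norm_image_sub_le_of_norm_fderiv_le (𝕜 := ℝ)
      (f := mderiv2 (a, b) f) (C := 2 * (2 ^ j * C * ‖x‖ ^ j)) (fun z _ => hd z) (x := 0) (y := x)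
      (by
        intro z hz
        have hzx : ‖z‖ ≤ ‖x‖ := by simpa using hz
        have hz1 : z ∈ Metric.closedBall (0 : ℝ × ℝ) 1 := by simpa using hzx.trans hx1
        apply fderiv_bound_pd
        · rw [pd1_mderiv2]
          refine (ih (a + 1) b (by omega) z hz1).trans ?_
          gcongr
        · rw [pd2_mderiv2 hf]
          refine (ih a (b + 1) (by omega) z hz1).trans ?_
          gcongr)
      (by simp) (by simp)
    rw [h0 (a, b) (by simp; omega), sub_zero, sub_zero] at this
    refine this.trans (le_of_eq ?_)
    ring

lemma pd1_scale {f : ℝ × ℝ → ℂ} (hf : ContDiff ℝ ∞ f) (t : ℝ) (c : ℂ) :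
    pd1 (fun y => c * f (t • y)) = fun y => (c * t) * pd1 f (t • y) := by
  ext x
  unfold pd1
  have h1 : HasFDerivAt (fun y : ℝ × ℝ => t • y) (t • ContinuousLinearMap.id ℝ (ℝ × ℝ)) x :=
    (hasFDerivAt_id x).const_smul t
  have := (((smooth_diff hf (t • x)).hasFDerivAt).comp x h1).const_mul c
  rw [HasFDerivAt.fderiv (f := fun y => c * f (t • y)) this]
  simp only [ContinuousLinearMap.smul_apply, ContinuousLinearMap.comp_apply, ContinuousLinearMap.id_apply,
    map_smul, smul_eq_mul, Complex.real_smul]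
  ring

lemma pd2_scale {f : ℝ × ℝ → ℂ} (hf : ContDiff ℝ ∞ f) (t : ℝ) (c : ℂ) :
    pd2 (fun y => c * f (t • y)) = fun y => (c * t) * pd2 f (t • y) := by
  ext x
  unfold pd2
  have h1 : HasFDerivAt (fun y : ℝ × ℝ => t • y) (t • ContinuousLinearMap.id ℝ (ℝ × ℝ)) x :=
    (hasFDerivAt_id x).const_smul t
  have := (((smooth_diff hf (t • x)).hasFDerivAt).comp x h1).const_mul c
  rw [HasFDerivAt.fderiv (f := fun y => c * f (t • y)) this]
  simp only [ContinuousLinearMap.smul_apply, ContinuousLinearMap.comp_apply, ContinuousLinearMap.id_apply,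
    map_smul, smul_eq_mul, Complex.real_smul]
  ring

lemma mderiv2_scale {f : ℝ × ℝ → ℂ} (hf : ContDiff ℝ ∞ f) (t : ℝ) (α : ℕ × ℕ) :
    mderiv2 α (fun y => f (t • y)) = fun y => (t : ℂ) ^ (α.1 + α.2) * mderiv2 α f (t • y) := by
  have h2 : ∀ n, pd2^[n] (fun y => f (t • y)) = fun y => (t : ℂ) ^ n * pd2^[n] f (t • y) := by
    intro n
    induction n with
    | zero => simp
    | succ n ih =>
      rw [Function.iterate_succ_apply', ih, pd2_scale (pd2_it_smooth hf n)]
      simp only [Function.iterate_succ_apply', pow_succ]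
  have h1 : ∀ n m, pd1^[n] (fun y => (t : ℂ) ^ m * pd2^[m] f (t • y))
      = fun y => (t : ℂ) ^ (n + m) * pd1^[n] (pd2^[m] f) (t • y) := by
    intro n m
    induction n with
    | zero => simp
    | succ n ih =>
      rw [Function.iterate_succ_apply', ih, pd1_scale (pd1_it_smooth (pd2_it_smooth hf m) n)]
      simp only [Function.iterate_succ_apply']
      ext y; ring
  unfold mderiv2
  rw [h2, h1]

lemma T_zero_of_flat (T' : TDist2) (p : ℕ) (hsupp : distSupport2 T' ⊆ Metric.closedBall 0 0)
    (hord : hasOrderAtMost2 T' p) (ψ : 𝓢(ℝ × ℝ, ℂ))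
    (h0 : ∀ α : ℕ × ℕ, α.1 + α.2 ≤ p → mderiv2 α ψ 0 = 0) : T' ψ = 0 := by
  obtain ⟨M, hM0, hM⟩ := bound_A0 T' p 0 hsupp hord 1 one_pos one_pos
  obtain ⟨C, hC0, hC⟩ := exists_deriv_bound (ψ.smooth ⊤) (Metric.closedBall 0 1) (isCompact_closedBall _ _) (p + 1)
  let χ := bmp (1 / 2) 1 (by norm_num) (by norm_num)
  obtain ⟨A, hA0, hA⟩ := exists_deriv_bound (cb_contDiff χ) (Metric.closedBall 0 1) (isCompact_closedBall _ _) p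
  have hflat := flat_bound (ψ.smooth ⊤) p C hC h0
  have main : ∀ s : ℝ, 0 < s → s ≤ 1 → ‖T' ψ‖ ≤ M * (2 ^ p * A * (2 ^ (p + 1) * C)) * s := by
    intro s hs hs1
    let g : ℝ × ℝ → ℂ := fun y => cb χ (s⁻¹ • y)
    have hgc : HasCompactSupport g :=
      (cb_compact χ).comp_homeomorph (Homeomorph.smulOfNeZero s⁻¹ (by positivity))
    have hgs : ContDiff ℝ ∞ g := (cb_contDiff χ).comp (contDiff_const_smul _)
    have e : T' (smulS g hgc hgs ψ) = T' ψ := by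
      refine T_eq_of_near T' _ hsupp _ _ (Metric.ball 0 (s / 2)) Metric.isOpen_ball
        (Metric.closedBall_subset_ball (by positivity)) ?_
      intro x hx
      have hx' : ‖x‖ < s / 2 := by simpa using hx
      have : χ (s⁻¹ • x) = 1 := by
        apply χ.one_of_mem_closedBall
        rw [mem_closedBall_zero_iff, norm_smul, norm_inv, Real.norm_eq_abs, abs_of_pos hs]
        show _ ≤ (1 / 2 : ℝ)
        rw [inv_mul_le_iff₀ hs]; linarith
      rw [smulS_apply]
      simp only [g, cb, this]
      simp
    rw [← e, mul_assoc]
    refine hM _ _ (by positivity) ?_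
    intro α hα x hx
    have hx1 : ‖x‖ ≤ 1 := by simpa using hx
    by_cases hxs : ‖x‖ ≤ s
    · have hin : s⁻¹ • x ∈ Metric.closedBall (0 : ℝ × ℝ) 1 := by
        rw [mem_closedBall_zero_iff, norm_smul, norm_inv, Real.norm_eq_abs, abs_of_pos hs]
        rw [inv_mul_le_iff₀ hs]; linarith
      have := leibniz_bound x s⁻¹ (by positivity) (α.1 + α.2) α rfl g ψ A (2 ^ (p + 1) * C * s ^ (p + 1))
        hgs (ψ.smooth ⊤) hA0 (by positivity)
        (by
          intro β h1 h2
          have hg : mderiv2 β g = _ := mderiv2_scale (cb_contDiff χ) s⁻¹ β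
          rw [hg, norm_mul, norm_pow, Complex.norm_real, norm_inv, Real.norm_eq_abs, abs_of_pos hs, mul_comm]
          gcongr
          exact hA β (by omega) _ hin)
        (by
          intro β h1 h2
          refine (hflat (p + 1 - (β.1 + β.2)) β.1 β.2 (by omega) x hx).trans ?_
          calc 2 ^ (p + 1 - (β.1 + β.2)) * C * ‖x‖ ^ (p + 1 - (β.1 + β.2))
              ≤ 2 ^ (p + 1) * C * s ^ (p + 1 - (β.1 + β.2)) := by
                gcongr
                · norm_num
                · omega
            _ = 2 ^ (p + 1) * C * s ^ (p + 1) * s⁻¹ ^ (β.1 + β.2) := by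
                rw [mul_assoc _ (s ^ (p + 1))]
                congr 1
                rw [pow_sub₀ _ hs.ne' (by omega), inv_pow])
      refine this.trans ?_
      calc 2 ^ (α.1 + α.2) * A * (2 ^ (p + 1) * C * s ^ (p + 1)) * s⁻¹ ^ (α.1 + α.2)
          = 2 ^ (α.1 + α.2) * A * (2 ^ (p + 1) * C) * (s ^ (p + 1) * s⁻¹ ^ (α.1 + α.2)) := by ring
        _ ≤ 2 ^ p * A * (2 ^ (p + 1) * C) * s := by
            have h5 : s ^ (p + 1) * s⁻¹ ^ (α.1 + α.2) = s ^ (p + 1 - (α.1 + α.2)) := by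
              rw [pow_sub₀ _ hs.ne' (by omega), inv_pow]
            have h6 : s ^ (p + 1 - (α.1 + α.2)) ≤ s := by
              calc s ^ (p + 1 - (α.1 + α.2)) ≤ s ^ 1 :=
                    pow_le_pow_of_le_one hs.le hs1 (by omega)
                _ = s := pow_one s
            rw [h5]
            gcongr
            norm_num
    · have hz : (smulS g hgc hgs ψ : ℝ × ℝ → ℂ) =ᶠ[𝓝 x] ((0 : ℂ) • (ψ : ℝ × ℝ → ℂ)) := by
        have ho : IsOpen {y : ℝ × ℝ | s < ‖y‖} := isOpen_lt continuous_const continuous_norm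
        filter_upwards [ho.mem_nhds (not_le.1 hxs)] with y hy
        have hy' : s < ‖y‖ := hy
        have : χ (s⁻¹ • y) = 0 := by
          apply χ.zero_of_le_dist
          rw [dist_zero_right, norm_smul, norm_inv, Real.norm_eq_abs, abs_of_pos hs]
          show (1 : ℝ) ≤ _
          rw [le_inv_mul_iff₀ hs]; linarith
        rw [smulS_apply]
        simp only [g, cb, this]
        simp
      rw [(mderiv2_congr hz α).eq_of_nhds, mderiv2_smul (ψ.smooth ⊤), Pi.smul_apply, zero_smul, norm_zero]
      positivity
  have hlim : Filter.Tendsto (fun s : ℝ => M * (2 ^ p * A * (2 ^ (p + 1) * C)) * s) (𝓝[>] 0)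
      (𝓝 (M * (2 ^ p * A * (2 ^ (p + 1) * C)) * 0)) :=
    ((continuous_const.mul continuous_id).tendsto 0).mono_left nhdsWithin_le_nhds
  rw [mul_zero] at hlim
  have : ‖T' ψ‖ ≤ 0 := by
    refine ge_of_tendsto hlim ?_
    filter_upwards [Ioc_mem_nhdsGT (zero_lt_one' ℝ)] with s hs
    exact main s hs.1 hs.2
  simpa using this

/-- jet evaluation as a linear map -/
def jetAt (α : ℕ × ℕ) (x : ℝ × ℝ) : 𝓢(ℝ × ℝ, ℂ) →ₗ[ℂ] ℂ where
  toFun ψ := mderiv2 α ψ x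
  map_add' f g := by
    have := mderiv2_add (f.smooth ⊤) (g.smooth ⊤) α
    exact congrFun this x
  map_smul' c f := by
    have := mderiv2_smul (f.smooth ⊤) c α
    exact congrFun this x

lemma bound_point (T' : TDist2) (p : ℕ) (hsupp : distSupport2 T' ⊆ Metric.closedBall 0 0)
    (hord : hasOrderAtMost2 T' p) :
    ∃ M : ℝ, 0 ≤ M ∧ ∀ ψ : 𝓢(ℝ × ℝ, ℂ), ∀ B : ℝ, 0 ≤ B →
      (∀ α : ℕ × ℕ, α.1 + α.2 ≤ p → ∀ x ∈ Metric.closedBall (0 : ℝ × ℝ) 0, ‖mderiv2 α ψ x‖ ≤ B) →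
      ‖T' ψ‖ ≤ M * B := by
  let ι := {α : ℕ × ℕ // α ∈ (Finset.range (p + 1) ×ˢ Finset.range (p + 1)).filter
              (fun α : ℕ × ℕ => α.1 + α.2 ≤ p)}
  have hmem := mem_span_of_iInf_ker_le_ker (L := fun i : ι => jetAt i.1 0) (K := T'.toLinearMap) (by
    intro ψ hψ
    rw [Submodule.mem_iInf] at hψ
    apply T_zero_of_flat T' p hsupp hord ψ
    intro α hα
    exact hψ ⟨α, by simp; omega⟩)
  rw [Submodule.mem_span_range_iff_exists_fun] at hmem
  obtain ⟨a, ha⟩ := hmem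
  refine ⟨∑ i, ‖a i‖, by positivity, ?_⟩
  intro ψ B hB h
  have : T' ψ = ∑ i, a i * mderiv2 i.1 ψ 0 := by
    have := congrArg (fun l : 𝓢(ℝ × ℝ, ℂ) →ₗ[ℂ] ℂ => l ψ) ha
    simp only [LinearMap.sum_apply, LinearMap.smul_apply, smul_eq_mul] at this
    exact this.symm
  rw [this, Finset.sum_mul]
  refine (norm_sum_le _ _).trans (Finset.sum_le_sum ?_)
  intro i _
  rw [norm_mul]
  gcongr
  exact h i.1 (Finset.mem_filter.1 i.2).2 0 (by simp)

end

section
open scoped SchwartzMap ContDiff Topology Convolution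

/-! ### Mollification of a family of partial derivatives -/

/-- mollified function -/
def moll (φ : ContDiffBump (0 : ℝ × ℝ)) (u : ℝ × ℝ → ℂ) : ℝ × ℝ → ℂ :=
  (φ.normed volume ⋆[ContinuousLinearMap.lsmul ℝ ℝ, volume] u)

lemma moll_smooth (φ : ContDiffBump (0 : ℝ × ℝ)) {u : ℝ × ℝ → ℂ} (hu : Continuous u) :
    ContDiff ℝ ∞ (moll φ u) :=
  φ.hasCompactSupport_normed.contDiff_convolution_left _ φ.contDiff_normed hu.locallyIntegrable

lemma moll_apply (φ : ContDiffBump (0 : ℝ × ℝ)) (u : ℝ × ℝ → ℂ) (x : ℝ × ℝ) :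
    moll φ u x = ∫ t, φ.normed volume t • u (x - t) := rfl

lemma moll_dir (φ : ContDiffBump (0 : ℝ × ℝ)) {u u' : ℝ × ℝ → ℂ} (hu : Continuous u)
    (hu' : Continuous u') (e : ℝ × ℝ)
    (h : ∀ z : ℝ × ℝ, ∀ s : ℝ, HasDerivAt (fun s : ℝ => u (z + s • e)) (u' (z + s • e)) s) (x : ℝ × ℝ) :
    fderiv ℝ (moll φ u) x e = moll φ u' x := by
  have h1 : HasDerivAt (fun s : ℝ => moll φ u (x + s • e)) (fderiv ℝ (moll φ u) x e) 0 := by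
    have hd := (smooth_diff (moll_smooth φ hu) x).hasFDerivAt
    have h2 : HasDerivAt (fun s : ℝ => x + s • e) e 0 := by
      have := ((hasDerivAt_id (0 : ℝ)).smul_const e).const_add x
      simpa using this
    have hd' : HasFDerivAt (moll φ u) (fderiv ℝ (moll φ u) x) (x + (0 : ℝ) • e) := by simpa using hd
    exact hd'.comp_hasDerivAt (0 : ℝ) h2
  have hcρ : Continuous (φ.normed volume) := φ.contDiff_normed (n := 0) |>.continuous
  have hIntg : Integrable (φ.normed volume) (volume : Measure (ℝ × ℝ)) :=
    hcρ.integrable_of_hasCompactSupport φ.hasCompactSupport_normed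
  obtain ⟨C, hC⟩ := (isCompact_closedBall (0 : ℝ × ℝ) (‖x‖ + ‖e‖ + φ.rOut)).exists_bound_of_continuousOn
    hu'.continuousOn
  have hC0 : 0 ≤ C := (norm_nonneg _).trans (hC 0 (by
    have := φ.rOut_pos
    simp; positivity))
  have h2 := hasDerivAt_integral_of_dominated_loc_of_deriv_le (μ := (volume : Measure (ℝ × ℝ)))
    (F := fun (s : ℝ) t => φ.normed volume t • u (x + s • e - t))
    (F' := fun (s : ℝ) t => φ.normed volume t • u' (x + s • e - t)) (x₀ := 0)
    (bound := fun t => ‖φ.normed volume t‖ * C) (s := Metric.ball 0 1) (Metric.ball_mem_nhds _ one_pos)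
    (by
      refine Filter.Eventually.of_forall fun s => Continuous.aestronglyMeasurable ?_
      fun_prop)
    (by
      refine Continuous.integrable_of_hasCompactSupport (by fun_prop) ?_
      exact φ.hasCompactSupport_normed.smul_right)
    (Continuous.aestronglyMeasurable (by fun_prop))
    (by
      refine Filter.Eventually.of_forall fun t s hs => ?_
      rw [norm_smul]
      by_cases ht : ‖t‖ < φ.rOut
      · gcongr
        apply hC
        rw [mem_closedBall_zero_iff]
        refine (norm_sub_le _ _).trans ?_
        gcongr
        refine (norm_add_le _ _).trans ?_
        gcongr
        rw [norm_smul]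
        have : ‖s‖ < 1 := by simpa using hs
        exact mul_le_of_le_one_left (norm_nonneg _) this.le
      · have : φ.normed volume t = 0 := by
          have hs := φ.support_normed_eq (μ := (volume : Measure (ℝ × ℝ)))
          rw [← Function.notMem_support, hs]
          simpa using ht
        rw [this]; simp)
    (hIntg.norm.mul_const C)
    (by
      refine Filter.Eventually.of_forall fun t s hs => ?_
      have := (h (x - t) s).const_smul (φ.normed volume t)
      have e1 : ∀ s : ℝ, x - t + s • e = x + s • e - t := fun s => by abel
      simp only [e1] at this
      exact this)
  have h3 := h2.2
  have h4 := h1.unique h3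
  rw [h4, moll_apply]
  simp

/-- A family behaving like partial derivatives up to order `p`. -/
structure PFam (p : ℕ) (u : ℕ → ℕ → ℝ × ℝ → ℂ) : Prop where
  cont : ∀ a b, a + b ≤ p → Continuous (u a b)
  d1 : ∀ a b, a + b + 1 ≤ p → ∀ x y : ℝ, HasDerivAt (fun s => u a b (s, y)) (u (a + 1) b (x, y)) x
  d2 : ∀ a b, a + b + 1 ≤ p → ∀ x y : ℝ, HasDerivAt (fun s => u a b (x, s)) (u a (b + 1) (x, y)) y

lemma moll_pd1 (φ : ContDiffBump (0 : ℝ × ℝ)) {p : ℕ} {u : ℕ → ℕ → ℝ × ℝ → ℂ} (hu : PFam p u)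
    (a b : ℕ) (hab : a + b + 1 ≤ p) : pd1 (moll φ (u a b)) = moll φ (u (a + 1) b) := by
  ext x
  refine moll_dir φ (hu.cont a b (by omega)) (hu.cont (a + 1) b (by omega)) (1, 0) ?_ x
  rintro ⟨z1, z2⟩ s
  have := (hu.d1 a b hab (z1 + s) z2).comp_const_add z1 s
  simpa using this

lemma moll_pd2 (φ : ContDiffBump (0 : ℝ × ℝ)) {p : ℕ} {u : ℕ → ℕ → ℝ × ℝ → ℂ} (hu : PFam p u)
    (a b : ℕ) (hab : a + b + 1 ≤ p) : pd2 (moll φ (u a b)) = moll φ (u a (b + 1)) := by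
  ext x
  refine moll_dir φ (hu.cont a b (by omega)) (hu.cont a (b + 1) (by omega)) (0, 1) ?_ x
  rintro ⟨z1, z2⟩ s
  have := (hu.d2 a b hab z1 (z2 + s)).comp_const_add z2 s
  simpa using this

lemma moll_mderiv2 (φ : ContDiffBump (0 : ℝ × ℝ)) {p : ℕ} {u : ℕ → ℕ → ℝ × ℝ → ℂ} (hu : PFam p u)
    (a b : ℕ) (hab : a + b ≤ p) : mderiv2 (a, b) (moll φ (u 0 0)) = moll φ (u a b) := by
  have h2 : ∀ n, n ≤ p → pd2^[n] (moll φ (u 0 0)) = moll φ (u 0 n) := by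
    intro n hn
    induction n with
    | zero => rfl
    | succ n ih =>
      rw [Function.iterate_succ_apply', ih (by omega), moll_pd2 φ hu 0 n (by omega)]
  unfold mderiv2
  simp only
  rw [h2 b (by omega)]
  induction a with
  | zero => rfl
  | succ n ih =>
    rw [Function.iterate_succ_apply', ih (by omega), moll_pd1 φ hu n b (by omega)]

lemma moll_exists {p : ℕ} {u : ℕ → ℕ → ℝ × ℝ → ℂ} (hu : PFam p u) (R η s s' : ℝ) (hη : 0 < η)
    (hs : s' < s) (h0 : ∀ x ∈ Metric.closedBall (0 : ℝ × ℝ) s, u 0 0 x = 0) :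
    ∃ g : ℝ × ℝ → ℂ, ContDiff ℝ ∞ g ∧
      (∀ α : ℕ × ℕ, α.1 + α.2 ≤ p → ∀ x ∈ Metric.closedBall (0 : ℝ × ℝ) R,
        ‖mderiv2 α g x - u α.1 α.2 x‖ ≤ η) ∧ ∀ x ∈ Metric.ball (0 : ℝ × ℝ) s', g x = 0 := by
  have hev : ∀ α : ℕ × ℕ, α.1 + α.2 ≤ p → ∀ᶠ ε in 𝓝[>] (0 : ℝ), ∀ x ∈ Metric.closedBall (0 : ℝ × ℝ) R,
      ∀ y, dist y x < ε → dist (u α.1 α.2 y) (u α.1 α.2 x) ≤ η := by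
    intro α hα
    have := (isCompact_closedBall (0 : ℝ × ℝ) R).uniformContinuousAt_of_continuousAt (u α.1 α.2)
      (fun x _ => (hu.cont _ _ hα).continuousAt) (Metric.dist_mem_uniformity hη)
    obtain ⟨ε, hε, h⟩ := Metric.mem_uniformity_dist.1 this
    filter_upwards [Ioo_mem_nhdsGT hε] with ε' hε' x hx y hy
    have := h (show dist x y < ε by rw [dist_comm]; exact hy.trans hε'.2) hx
    rw [dist_comm]
    exact le_of_lt this
  have hev2 : ∀ᶠ ε in 𝓝[>] (0 : ℝ), ∀ α ∈ (Finset.range (p + 1) ×ˢ Finset.range (p + 1)).filter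
      (fun α : ℕ × ℕ => α.1 + α.2 ≤ p), ∀ x ∈ Metric.closedBall (0 : ℝ × ℝ) R,
      ∀ y, dist y x < ε → dist (u α.1 α.2 y) (u α.1 α.2 x) ≤ η := by
    rw [Filter.eventually_all_finset]
    intro α hα
    exact hev α (Finset.mem_filter.1 hα).2
  obtain ⟨ε, hε1, hε0, hε2⟩ := (hev2.and (Ioo_mem_nhdsGT (sub_pos.2 hs))).exists
  let φ := bmp (ε / 2) ε (by linarith) (by linarith)
  refine ⟨moll φ (u 0 0), moll_smooth φ (hu.cont 0 0 (by omega)), ?_, ?_⟩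
  · rintro ⟨a, b⟩ hα x hx
    rw [moll_mderiv2 φ hu a b hα, ← dist_eq_norm]
    apply φ.dist_normed_convolution_le (hu.cont a b hα).aestronglyMeasurable
    intro y hy
    simp only at hα
    exact hε1 (a, b) (by simp; omega) x hx y hy
  · intro x hx
    have hx' : ‖x‖ < s' := by simpa using hx
    have hx0 : u 0 0 x = 0 := h0 x (by simp; linarith)
    rw [← hx0]
    apply φ.normed_convolution_eq_right
    intro y hy
    rw [hx0]
    apply h0
    have h1 : dist y x < ε := hy
    rw [mem_closedBall_zero_iff]
    have := norm_le_norm_add_norm_sub' y x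
    rw [dist_eq_norm] at h1
    linarith

/-! ### Reflection -/

lemma exists_coeff (p : ℕ) : ∃ a : Fin (p + 1) → ℝ, ∀ m ≤ p, ∑ j, a j * (-(1 / ((j : ℕ) + 1 : ℝ))) ^ m = 1 := by
  let v : Fin (p + 1) → ℝ := fun j => -(1 / ((j : ℕ) + 1 : ℝ))
  have hv : Function.Injective v := by
    intro i j h
    simp only [v, neg_inj, one_div, inv_inj, add_left_inj, Nat.cast_inj] at h
    exact Fin.ext h
  have hdet : (Matrix.vandermonde v).transpose.det ≠ 0 := by
    rw [Matrix.det_transpose]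
    exact Matrix.det_vandermonde_ne_zero_iff.2 hv
  have hs := Matrix.mulVec_surjective_iff_isUnit.2
    ((Matrix.isUnit_iff_isUnit_det _).2 (isUnit_iff_ne_zero.2 hdet))
  obtain ⟨a, ha⟩ := hs (fun _ => 1)
  refine ⟨a, fun m hm => ?_⟩
  have := congrFun ha ⟨m, by omega⟩
  simp only [Matrix.mulVec, dotProduct, Matrix.transpose_apply, Matrix.vandermonde_apply] at this
  refine Eq.trans (Finset.sum_congr rfl ?_) this
  intro j _
  rw [mul_comm]

def clp (s t : ℝ) : ℝ := max (-s) (min s t)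

/-- reflection map -/
def rfl1 (s v t : ℝ) : ℝ := clp s t + v * (t - clp s t)

lemma clp_cont (s : ℝ) : Continuous (clp s) := by unfold clp; fun_prop

lemma rfl1_cont (s v : ℝ) : Continuous (rfl1 s v) := by
  have := clp_cont s
  unfold rfl1; fun_prop

lemma clp_mid {s t : ℝ} (h : |t| ≤ s) : clp s t = t := by
  rw [abs_le] at h
  unfold clp
  rw [min_eq_right h.2, max_eq_right h.1]

lemma clp_right {s t : ℝ} (hs : 0 < s) (h : s ≤ t) : clp s t = s := by
  unfold clp
  rw [min_eq_left h, max_eq_right (by linarith)]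

lemma clp_left {s t : ℝ} (hs : 0 < s) (h : t ≤ -s) : clp s t = -s := by
  unfold clp
  rw [min_eq_right (by linarith), max_eq_left h]

lemma rfl1_mid {s v t : ℝ} (h : |t| ≤ s) : rfl1 s v t = t := by
  unfold rfl1; rw [clp_mid h]; ring

lemma rfl1_bound {s v t : ℝ} (hs : 0 < s) (hv0 : v ≤ 0) (hv1 : -1 ≤ v) (h : |t| ≤ 2 * s) :
    |rfl1 s v t| ≤ s := by
  rcases le_or_gt |t| s with h1 | h1
  · rw [rfl1_mid h1]; exact h1
  · rw [abs_le] at h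
    unfold rfl1
    rcases lt_abs.1 h1 with h2 | h2
    · rw [clp_right hs h2.le, abs_le]
      constructor <;> nlinarith
    · rw [clp_left hs (by linarith), abs_le]
      constructor <;> nlinarith

/-- weights of the reflection -/
structure Wts (p : ℕ) where
  a : Fin (p + 1) → ℝ
  v : Fin (p + 1) → ℝ
  v0 : ∀ j, v j ≤ 0
  v1 : ∀ j, -1 ≤ v j
  sum : ∀ m ≤ p, ∑ j, a j * v j ^ m = 1

lemma exists_wts (p : ℕ) : Nonempty (Wts p) := by
  obtain ⟨a, ha⟩ := exists_coeff p
  refine ⟨⟨a, fun j => -(1 / ((j : ℕ) + 1 : ℝ)), fun j => ?_, fun j => ?_, ha⟩⟩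
  · rw [Left.neg_nonpos_iff]; positivity
  · rw [neg_le_neg_iff, div_le_one (by positivity)]
    linarith [Nat.cast_nonneg (α := ℝ) (j : ℕ)]

variable {p : ℕ}

/-- one dimensional reflection operator -/
def ext1 (W : Wts p) (s : ℝ) (m : ℕ) (H : ℝ → ℂ) (t : ℝ) : ℂ :=
  ∑ j, (W.a j * W.v j ^ m) • H (rfl1 s (W.v j) t)

lemma ext1_mid (W : Wts p) {s : ℝ} {m : ℕ} (hm : m ≤ p) (H : ℝ → ℂ) {t : ℝ} (h : |t| ≤ s) :
    ext1 W s m H t = H t := by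
  unfold ext1
  simp only [rfl1_mid h]
  rw [← Finset.sum_smul, W.sum m hm, one_smul]

lemma ext1_cont (W : Wts p) (s : ℝ) (m : ℕ) {H : ℝ → ℂ} (hH : Continuous H) :
    Continuous (ext1 W s m H) := by
  unfold ext1
  have := fun v => rfl1_cont s v
  fun_prop

lemma hasDerivAt_of_off {f g : ℝ → ℂ} (S : Set ℝ) (hS : S.Countable) (hf : Continuous f) (hg : Continuous g)
    (h : ∀ t, t ∉ S → HasDerivAt f (g t) t) (t : ℝ) : HasDerivAt f (g t) t := by
  have h1 : ∀ t, f t = f 0 + ∫ x in (0 : ℝ)..t, g x := by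
    intro t
    have := integral_eq_of_hasDerivAt_off_countable f g (a := 0) (b := t) hS hf.continuousOn
      (fun x hx => h x hx.2) (hg.intervalIntegrable _ _)
    rw [this]; ring
  have h2 : HasDerivAt (fun t => f 0 + ∫ x in (0 : ℝ)..t, g x) (g t) t :=
    (intervalIntegral.integral_hasDerivAt_right (hg.intervalIntegrable _ _)
      (hg.stronglyMeasurableAtFilter _ _) hg.continuousAt).const_add _
  rwa [← funext h1] at h2

lemma ext1_deriv (W : Wts p) {s : ℝ} (hs : 0 < s) {m : ℕ} (hm : m + 1 ≤ p) {H H' : ℝ → ℂ}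
    (hH : ∀ t, HasDerivAt H (H' t) t) (hc : Continuous H') (t : ℝ) :
    HasDerivAt (ext1 W s m H) (ext1 W s (m + 1) H' t) t := by
  have hcH : Continuous H := continuous_iff_continuousAt.2 fun t => (hH t).continuousAt
  refine hasDerivAt_of_off {-s, s} (Set.to_countable _) (ext1_cont W s m hcH)
    (ext1_cont W s (m + 1) hc) ?_ t
  intro t ht
  simp only [Set.mem_insert_iff, Set.mem_singleton_iff, not_or] at ht
  by_cases hmid : |t| < s
  · rw [ext1_mid W hm H' hmid.le]
    refine (hH t).congr_of_eventuallyEq ?_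
    filter_upwards [(isOpen_lt continuous_abs continuous_const).mem_nhds hmid] with t' ht'
    exact ext1_mid W (by omega) H (le_of_lt ht')
  · have key : ∀ j, HasDerivAt (rfl1 s (W.v j)) (W.v j) t := by
      intro j
      have : ∃ q : ℝ, rfl1 s (W.v j) =ᶠ[𝓝 t] fun t' => q + W.v j * (t' - q) := by
        rcases le_abs.1 (not_lt.1 hmid) with h | h
        · refine ⟨s, ?_⟩
          filter_upwards [lt_mem_nhds (lt_of_le_of_ne h (Ne.symm ht.2))] with t' ht'
          rw [rfl1, clp_right hs ht'.le]
        · refine ⟨-s, ?_⟩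
          filter_upwards [gt_mem_nhds (lt_of_le_of_ne (show t ≤ -s by linarith) ht.1)] with t' ht'
          rw [rfl1, clp_left hs ht'.le]
      obtain ⟨q, hq⟩ := this
      refine HasDerivAt.congr_of_eventuallyEq ?_ hq
      have := (((hasDerivAt_id t).sub_const q).const_mul (W.v j)).const_add q
      simpa using this
    unfold ext1
    refine HasDerivAt.fun_sum fun j _ => ?_
    have := ((hH _).scomp t (key j)).const_smul (W.a j * W.v j ^ m)
    rw [smul_smul, mul_assoc, ← pow_succ] at this
    exact this

/-- two dimensional reflection operator -/
def ext2 (W : Wts p) (s : ℝ) (m n : ℕ) (h : ℝ × ℝ → ℂ) (z : ℝ × ℝ) : ℂ :=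
  ∑ j, (W.a j * W.v j ^ m) • ∑ k, (W.a k * W.v k ^ n) • h (rfl1 s (W.v j) z.1, rfl1 s (W.v k) z.2)

lemma ext2_cont (W : Wts p) (s : ℝ) (m n : ℕ) {h : ℝ × ℝ → ℂ} (hh : Continuous h) :
    Continuous (ext2 W s m n h) := by
  unfold ext2
  have := fun v => rfl1_cont s v
  fun_prop

lemma ext2_mid (W : Wts p) {s : ℝ} {m n : ℕ} (hm : m ≤ p) (hn : n ≤ p) (h : ℝ × ℝ → ℂ) {z : ℝ × ℝ}
    (hz : ‖z‖ ≤ s) : ext2 W s m n h z = h z := by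
  have h1 : |z.1| ≤ s := (norm_fst_le z).trans hz
  have h2 : |z.2| ≤ s := (norm_snd_le z).trans hz
  unfold ext2
  simp only [rfl1_mid h1, rfl1_mid h2]
  rw [← Finset.sum_smul, ← Finset.sum_smul, W.sum m hm, W.sum n hn, one_smul, one_smul]

lemma ext2_d1 (W : Wts p) {s : ℝ} (hs : 0 < s) {m n : ℕ} (hm : m + 1 ≤ p) {h h1 : ℝ × ℝ → ℂ}
    (hd : ∀ x y, HasDerivAt (fun t => h (t, y)) (h1 (x, y)) x) (hc : Continuous h1) (x y : ℝ) :
    HasDerivAt (fun t => ext2 W s m n h (t, y)) (ext2 W s (m + 1) n h1 (x, y)) x := by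
  refine ext1_deriv W hs hm (H := fun x' => ∑ k, (W.a k * W.v k ^ n) • h (x', rfl1 s (W.v k) y))
    (H' := fun x' => ∑ k, (W.a k * W.v k ^ n) • h1 (x', rfl1 s (W.v k) y)) ?_ (by fun_prop) x
  intro t
  exact HasDerivAt.fun_sum fun k _ => (hd t _).fun_const_smul _

lemma ext2_d2 (W : Wts p) {s : ℝ} (hs : 0 < s) {m n : ℕ} (hn : n + 1 ≤ p) {h h2 : ℝ × ℝ → ℂ}
    (hd : ∀ x y, HasDerivAt (fun t => h (x, t)) (h2 (x, y)) y) (hc : Continuous h2) (x y : ℝ) :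
    HasDerivAt (fun t => ext2 W s m n h (x, t)) (ext2 W s m (n + 1) h2 (x, y)) y := by
  unfold ext2
  refine HasDerivAt.fun_sum fun j _ => HasDerivAt.fun_const_smul _ ?_
  exact ext1_deriv W hs hn (H := fun y' => h (rfl1 s (W.v j) x, y'))
    (H' := fun y' => h2 (rfl1 s (W.v j) x, y')) (fun t => hd _ t) (by fun_prop) y

lemma ext2_bound (W : Wts p) {s : ℝ} (hs : 0 < s) (m n : ℕ) (h : ℝ × ℝ → ℂ) (B : ℝ) (hB0 : 0 ≤ B)
    (hB : ∀ x ∈ Metric.closedBall (0 : ℝ × ℝ) s, ‖h x‖ ≤ B) (z : ℝ × ℝ) (hz : ‖z‖ ≤ 2 * s) :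
    ‖ext2 W s m n h z‖ ≤ (∑ j, |W.a j|) ^ 2 * B := by
  have hw : ∀ j, ∀ m : ℕ, ‖W.a j * W.v j ^ m‖ ≤ |W.a j| := by
    intro j m
    rw [norm_mul, norm_pow]
    have : ‖W.v j‖ ≤ 1 := by
      rw [Real.norm_eq_abs, abs_le]; exact ⟨W.v1 j, (W.v0 j).trans zero_le_one⟩
    exact mul_le_of_le_one_right (norm_nonneg _) (pow_le_one₀ (norm_nonneg _) this)
  have h1 : |z.1| ≤ 2 * s := (norm_fst_le z).trans hz
  have h2 : |z.2| ≤ 2 * s := (norm_snd_le z).trans hz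
  unfold ext2
  rw [sq, mul_assoc, Finset.sum_mul]
  refine (norm_sum_le _ _).trans (Finset.sum_le_sum fun j _ => ?_)
  rw [norm_smul]
  gcongr
  · exact hw j m
  rw [Finset.sum_mul]
  refine (norm_sum_le _ _).trans (Finset.sum_le_sum fun k _ => ?_)
  rw [norm_smul]
  gcongr
  · exact hw k n
  apply hB
  rw [mem_closedBall_zero_iff, Prod.norm_def]
  exact max_le (rfl1_bound hs (W.v0 j) (W.v1 j) h1) (rfl1_bound hs (W.v0 k) (W.v1 k) h2)

lemma smooth_d1 {f : ℝ × ℝ → ℂ} (hf : ContDiff ℝ ∞ f) (x y : ℝ) :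
    HasDerivAt (fun t => f (t, y)) (pd1 f (x, y)) x := by
  have h2 : HasDerivAt (fun t : ℝ => (t, y)) ((1 : ℝ), (0 : ℝ)) x :=
    (hasDerivAt_id x).prodMk (hasDerivAt_const x y)
  exact (smooth_diff hf (x, y)).hasFDerivAt.comp_hasDerivAt x h2

lemma smooth_d2 {f : ℝ × ℝ → ℂ} (hf : ContDiff ℝ ∞ f) (x y : ℝ) :
    HasDerivAt (fun t => f (x, t)) (pd2 f (x, y)) y := by
  have h2 : HasDerivAt (fun t : ℝ => (x, t)) ((0 : ℝ), (1 : ℝ)) y :=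
    (hasDerivAt_const y x).prodMk (hasDerivAt_id y)
  exact (smooth_diff hf (x, y)).hasFDerivAt.comp_hasDerivAt y h2

lemma pfam_ext (W : Wts p) {s : ℝ} (hs : 0 < s) {f : ℝ × ℝ → ℂ} (hf : ContDiff ℝ ∞ f) :
    PFam p (fun a b z => ext2 W s a b (mderiv2 (a, b) f) z - mderiv2 (a, b) f z) where
  cont a b hab := (ext2_cont W s a b (mderiv2_smooth hf _).continuous).sub
    (mderiv2_smooth hf _).continuous
  d1 a b hab x y := by
    have hd : ∀ x y, HasDerivAt (fun t => mderiv2 (a, b) f (t, y)) (mderiv2 (a + 1, b) f (x, y)) x := by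
      intro x y
      rw [← pd1_mderiv2]
      exact smooth_d1 (mderiv2_smooth hf _) x y
    exact (ext2_d1 W hs (by omega) hd (mderiv2_smooth hf _).continuous x y).sub (hd x y)
  d2 a b hab x y := by
    have hd : ∀ x y, HasDerivAt (fun t => mderiv2 (a, b) f (x, t)) (mderiv2 (a, b + 1) f (x, y)) y := by
      intro x y
      rw [← pd2_mderiv2 hf]
      exact smooth_d2 (mderiv2_smooth hf _) x y
    exact (ext2_d2 W hs (by omega) hd (mderiv2_smooth hf _).continuous x y).sub (hd x y)

lemma bound_step (T' : TDist2) (p : ℕ) (c : ℝ) (hc : 0 < c) (W : Wts p)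
    (hsupp : distSupport2 T' ⊆ Metric.closedBall 0 c) (M : ℝ) (hM0 : 0 ≤ M)
    (hM : ∀ ψ : 𝓢(ℝ × ℝ, ℂ), ∀ B : ℝ, 0 ≤ B →
      (∀ α : ℕ × ℕ, α.1 + α.2 ≤ p → ∀ x ∈ Metric.closedBall (0 : ℝ × ℝ) (2 * c), ‖mderiv2 α ψ x‖ ≤ B) →
      ‖T' ψ‖ ≤ M * B) (ψ : 𝓢(ℝ × ℝ, ℂ)) (s : ℝ) (hs : c < s) (B : ℝ) (hB0 : 0 ≤ B)
    (hB : ∀ α : ℕ × ℕ, α.1 + α.2 ≤ p → ∀ x ∈ Metric.closedBall (0 : ℝ × ℝ) s, ‖mderiv2 α ψ x‖ ≤ B)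
    (η : ℝ) (hη : 0 < η) :
    ‖T' ψ‖ ≤ M * ((∑ j, |W.a j|) ^ 2 * B + η) := by
  have hs0 : 0 < s := hc.trans hs
  have hψ : ContDiff ℝ ∞ ψ := ψ.smooth ⊤
  obtain ⟨g, hg, hgη, hg0⟩ := moll_exists (pfam_ext W hs0 hψ) (2 * c) η s ((c + s) / 2) hη (by linarith)
    (by
      intro x hx
      rw [ext2_mid W (by omega) (by omega) _ (by simpa using hx), sub_self])
  let χ := bmp (3 * c) (4 * c) (by linarith) (by linarith)
  let G : 𝓢(ℝ × ℝ, ℂ) := (show HasCompactSupport (cb χ * g) from (cb_compact χ).mul_right).toSchwartzMap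
    ((cb_contDiff χ).mul hg)
  have hG : ∀ x, G x = cb χ x * g x := fun _ => rfl
  have e : T' (ψ + G) = T' ψ := by
    refine T_eq_of_near T' _ hsupp _ _ (Metric.ball 0 ((c + s) / 2)) Metric.isOpen_ball
      (Metric.closedBall_subset_ball (by linarith)) ?_
    intro x hx
    show ψ x + G x = ψ x
    rw [hG, hg0 x hx, mul_zero, add_zero]
  rw [← e]
  refine hM _ _ (by positivity) ?_
  intro α hα x hx
  have hx' : ‖x‖ ≤ 2 * c := by simpa using hx
  have hnear : (⇑(ψ + G)) =ᶠ[𝓝 x] (⇑ψ + g) := by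
    have ho : IsOpen {y : ℝ × ℝ | ‖y‖ < 3 * c} := isOpen_lt continuous_norm continuous_const
    filter_upwards [ho.mem_nhds (show ‖x‖ < 3 * c by linarith)] with y hy
    have hy' : ‖y‖ < 3 * c := hy
    show ψ y + G y = ψ y + g y
    rw [hG, cb, χ.one_of_mem_closedBall (by rw [mem_closedBall_zero_iff]; exact hy'.le)]
    simp
  rw [(mderiv2_congr hnear α).eq_of_nhds, mderiv2_add hψ hg, Pi.add_apply]
  have h1 := hgη α hα x hx
  have h2 := ext2_bound W hs0 α.1 α.2 (mderiv2 α ψ) B hB0 (hB α hα) x (by linarith)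
  have e3 : mderiv2 α ψ x + mderiv2 α g x = ext2 W s α.1 α.2 (mderiv2 α ψ) x +
    (mderiv2 α g x - (ext2 W s α.1 α.2 (mderiv2 α ψ) x - mderiv2 α ψ x)) := by ring
  rw [e3]
  exact (norm_add_le _ _).trans (add_le_add h2 h1)

lemma bound_pos (T' : TDist2) (p : ℕ) (c : ℝ) (hc : 0 < c)
    (hsupp : distSupport2 T' ⊆ Metric.closedBall 0 c) (hord : hasOrderAtMost2 T' p) :
    ∃ M : ℝ, 0 ≤ M ∧ ∀ ψ : 𝓢(ℝ × ℝ, ℂ), ∀ B : ℝ, 0 ≤ B →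
      (∀ α : ℕ × ℕ, α.1 + α.2 ≤ p → ∀ x ∈ Metric.closedBall (0 : ℝ × ℝ) c, ‖mderiv2 α ψ x‖ ≤ B) →
      ‖T' ψ‖ ≤ M * B := by
  obtain ⟨W⟩ := exists_wts p
  obtain ⟨M, hM0, hM⟩ := bound_A0 T' p c hsupp hord (2 * c) (by linarith) (by linarith)
  refine ⟨M * (∑ j, |W.a j|) ^ 2, by positivity, ?_⟩
  intro ψ B hB0 hB
  have hψ : ContDiff ℝ ∞ ψ := ψ.smooth ⊤
  obtain ⟨L, hL0, hL⟩ := exists_deriv_bound hψ (Metric.closedBall 0 (2 * c)) (isCompact_closedBall _ _) (p + 1)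
  have main : ∀ δ : ℝ, 0 < δ → δ ≤ c →
      ‖T' ψ‖ ≤ M * ((∑ j, |W.a j|) ^ 2 * (B + 2 * L * δ) + δ) := by
    intro δ hδ hδc
    refine bound_step T' p c hc W hsupp M hM0 hM ψ (c + δ) (by linarith) _ (by positivity) ?_ δ hδ
    rintro ⟨a, b⟩ hα x hx
    have hx' : ‖x‖ ≤ c + δ := by simpa using hx
    have hα' : a + b ≤ p := hα
    have hcδ : 0 < c + δ := by linarith
    let x' : ℝ × ℝ := (c / (c + δ)) • x
    have hr1 : c / (c + δ) ≤ 1 := by rw [div_le_one hcδ]; linarith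
    have hr0 : 0 ≤ c / (c + δ) := by positivity
    have hx'c : ‖x'‖ ≤ c := by
      rw [norm_smul, Real.norm_eq_abs, abs_of_nonneg hr0]
      calc c / (c + δ) * ‖x‖ ≤ c / (c + δ) * (c + δ) := by gcongr
        _ = c := by field_simp
    have hdist : ‖x - x'‖ ≤ δ := by
      have : x - x' = (δ / (c + δ)) • x := by
        have h7 : δ / (c + δ) = 1 - c / (c + δ) := by field_simp; ring
        rw [h7, sub_smul, one_smul]
      rw [this, norm_smul, Real.norm_eq_abs, abs_of_nonneg (by positivity)]
      calc δ / (c + δ) * ‖x‖ ≤ δ / (c + δ) * (c + δ) := by gcongr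
        _ = δ := by field_simp
    have hd := smooth_diff (mderiv2_smooth hψ (a, b))
    have := (convex_closedBall (0 : ℝ × ℝ) (2 * c)).norm_image_sub_le_of_norm_fderiv_le (𝕜 := ℝ)
      (f := mderiv2 (a, b) ψ) (C := 2 * L) (fun z _ => hd z) (x := x') (y := x)
      (by
        intro z hz
        apply fderiv_bound_pd
        · rw [pd1_mderiv2]
          exact hL (a + 1, b) (by simp; omega) z hz
        · rw [pd2_mderiv2 hψ]
          exact hL (a, b + 1) (by simp; omega) z hz)
      (by simp only [mem_closedBall_zero_iff]; linarith) (by simp only [mem_closedBall_zero_iff]; linarith)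
    have hb := hB (a, b) hα x' (by simpa using hx'c)
    calc ‖mderiv2 (a, b) ψ x‖ ≤ ‖mderiv2 (a, b) ψ x'‖ + ‖mderiv2 (a, b) ψ x - mderiv2 (a, b) ψ x'‖ :=
          norm_le_norm_add_norm_sub' _ _
      _ ≤ B + 2 * L * δ := by
          refine add_le_add hb (this.trans ?_)
          gcongr
  have hlim : Filter.Tendsto (fun δ : ℝ => M * ((∑ j, |W.a j|) ^ 2 * (B + 2 * L * δ) + δ)) (𝓝[>] 0)
      (𝓝 (M * ((∑ j, |W.a j|) ^ 2 * (B + 2 * L * 0) + 0))) := by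
    have hcont : Continuous (fun δ : ℝ => M * ((∑ j, |W.a j|) ^ 2 * (B + 2 * L * δ) + δ)) := by fun_prop
    exact (hcont.tendsto 0).mono_left nhdsWithin_le_nhds
  have hfin := ge_of_tendsto hlim (b := ‖T' ψ‖) (by
    filter_upwards [Ioc_mem_nhdsGT hc] with δ hδ
    exact main δ hδ.1 hδ.2)
  refine hfin.trans (le_of_eq ?_)
  ring

lemma bound_all (T' : TDist2) (p : ℕ) (c : ℝ)
    (hsupp : distSupport2 T' ⊆ Metric.closedBall 0 c) (hord : hasOrderAtMost2 T' p) :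
    ∃ M : ℝ, 0 ≤ M ∧ ∀ ψ : 𝓢(ℝ × ℝ, ℂ), ∀ B : ℝ, 0 ≤ B →
      (∀ α : ℕ × ℕ, α.1 + α.2 ≤ p → ∀ x ∈ Metric.closedBall (0 : ℝ × ℝ) c, ‖mderiv2 α ψ x‖ ≤ B) →
      ‖T' ψ‖ ≤ M * B := by
  rcases lt_trichotomy c 0 with hc | hc | hc
  · refine ⟨0, le_rfl, fun ψ B hB _ => ?_⟩
    rw [Metric.closedBall_eq_empty.2 hc] at hsupp
    rw [supp_zero T' ∅ hsupp ψ (Set.disjoint_empty _)]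
    simp
  · subst hc
    exact bound_point T' p hsupp hord
  · exact bound_pos T' p c hc hsupp hord

end

section
open scoped SchwartzMap ContDiff Topology

lemma riesz_set (S : Set (ℝ × ℝ)) (hS : IsCompact S) (L : C(S, ℂ) →L[ℂ] ℂ) (κ : ℂ) (hκ : ‖κ‖ = 1) :
    ∃ (ν : Measure (ℝ × ℝ)) (w : ℝ × ℝ → ℂ), IsFiniteMeasure ν ∧ ν Sᶜ = 0 ∧ Measurable w ∧
      (∀ ξ, ‖w ξ‖ = 1) ∧ ∀ (f : ℝ × ℝ → ℂ) (hf : Continuous f),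
        κ * L ⟨fun x => f x, hf.comp continuous_subtype_val⟩ = ∫ ξ in S, f ξ * w ξ ∂ν := by
  classical
  have : CompactSpace S := isCompact_iff_compactSpace.1 hS
  obtain ⟨ν, w, h1, h2, h3, h4⟩ := riesz_complex L
  have hSm : MeasurableSet S := hS.isClosed.measurableSet
  have hemb : MeasurableEmbedding (Subtype.val : S → ℝ × ℝ) := MeasurableEmbedding.subtype_coe hSm
  let w' : ℝ × ℝ → ℂ := fun ξ => if h : ξ ∈ S then κ * w ⟨ξ, h⟩ else 1
  have hw'S : ∀ x : S, w' x = κ * w x := fun x => by simp [w', x.2]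
  have hz : (ν.map Subtype.val) Sᶜ = 0 := by
    rw [hemb.map_apply]
    simp
  refine ⟨ν.map Subtype.val, w', Measure.isFiniteMeasure_map _ _, hz, ?_, ?_, ?_⟩
  · exact Measurable.dite (h2.const_mul κ) measurable_const hSm
  · intro ξ
    by_cases h : ξ ∈ S
    · simp [w', h, hκ, h3]
    · simp [w', h]
  · intro f hf
    rw [h4, Measure.restrict_eq_self_of_ae_mem (by rw [ae_iff]; exact hz), hemb.integral_map]
    rw [← integral_const_mul]
    congr 1; ext x
    rw [hw'S]
    show κ * (f x * w x) = f x * (κ * w x)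
    ring

lemma mono_integrable (ψ : 𝓢(ℝ × ℝ, ℂ)) (a b : ℕ) :
    Integrable (fun z : ℝ × ℝ => (z.1 : ℂ) ^ a * (z.2 : ℂ) ^ b * ψ z) := by
  refine (ψ.integrable_pow_mul volume (a + b)).mono' ?_ ?_
  · have := ψ.continuous
    exact Continuous.aestronglyMeasurable (by fun_prop)
  · refine Filter.Eventually.of_forall fun z => ?_
    rw [norm_mul, norm_mul, norm_pow, norm_pow, Complex.norm_real, Complex.norm_real, pow_add]
    gcongr
    · exact norm_fst_le z
    · exact norm_snd_le z

lemma fubini_step (ν : Measure (ℝ × ℝ)) [IsFiniteMeasure ν] (w : ℝ × ℝ → ℂ) (hw : Measurable w)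
    (hw1 : ∀ ξ, ‖w ξ‖ = 1) (h : ℝ × ℝ → ℂ) (hh : Integrable h) :
    Integrable (fun z : ℝ × ℝ => (∫ ξ, Complex.exp (Complex.I * ((ξ.1 * z.1 + ξ.2 * z.2 : ℝ) : ℂ)) * w ξ ∂ν) * h z)
    ∧ ∫ ξ, (∫ z, Complex.exp (Complex.I * ((ξ.1 * z.1 + ξ.2 * z.2 : ℝ) : ℂ)) * h z) * w ξ ∂ν
      = ∫ z : ℝ × ℝ, (∫ ξ, Complex.exp (Complex.I * ((ξ.1 * z.1 + ξ.2 * z.2 : ℝ) : ℂ)) * w ξ ∂ν) * h z := by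
  have hwi : Integrable w ν := by
    refine (integrable_const (1 : ℝ)).mono' hw.aestronglyMeasurable ?_
    exact Filter.Eventually.of_forall fun ξ => (hw1 ξ).le
  have hprod : Integrable (fun q : (ℝ × ℝ) × (ℝ × ℝ) =>
      Complex.exp (Complex.I * ((q.1.1 * q.2.1 + q.1.2 * q.2.2 : ℝ) : ℂ)) * (w q.1 * h q.2)) (ν.prod volume) := by
    refine (hwi.mul_prod hh).bdd_mul (c := 1) (Continuous.aestronglyMeasurable (by fun_prop)) ?_
    refine Filter.Eventually.of_forall fun q => ?_
    rw [mul_comm, Complex.norm_exp_ofReal_mul_I]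
  have e1 : ∀ z, ∫ ξ, Complex.exp (Complex.I * ((ξ.1 * z.1 + ξ.2 * z.2 : ℝ) : ℂ)) * (w ξ * h z) ∂ν
      = (∫ ξ, Complex.exp (Complex.I * ((ξ.1 * z.1 + ξ.2 * z.2 : ℝ) : ℂ)) * w ξ ∂ν) * h z := by
    intro z
    rw [← integral_mul_const]
    congr 1; ext ξ; ring
  have e2 : ∀ ξ : ℝ × ℝ, ∫ z : ℝ × ℝ, Complex.exp (Complex.I * ((ξ.1 * z.1 + ξ.2 * z.2 : ℝ) : ℂ)) * (w ξ * h z)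
      = (∫ z : ℝ × ℝ, Complex.exp (Complex.I * ((ξ.1 * z.1 + ξ.2 * z.2 : ℝ) : ℂ)) * h z) * w ξ := by
    intro ξ
    rw [← integral_mul_const]
    congr 1; ext z; ring
  constructor
  · have := hprod.integral_prod_right
    simpa only [e1] using this
  · have := integral_integral_swap (f := fun ξ z : ℝ × ℝ =>
      Complex.exp (Complex.I * ((ξ.1 * z.1 + ξ.2 * z.2 : ℝ) : ℂ)) * (w ξ * h z)) hprod
    simp only [e1, e2] at this
    exact this

lemma structure_aux (p : ℕ) (S : Set (ℝ × ℝ)) (hS : IsCompact S) (T' : TDist2) (M : ℝ)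
    (hM0 : 0 ≤ M) (hM : ∀ ψ : 𝓢(ℝ × ℝ, ℂ), ∀ B : ℝ, 0 ≤ B →
      (∀ α : ℕ × ℕ, α.1 + α.2 ≤ p → ∀ x ∈ S, ‖mderiv2 α ψ x‖ ≤ B) → ‖T' ψ‖ ≤ M * B) :
    ∃ (ν : ℕ × ℕ → Measure (ℝ × ℝ)) (w : ℕ × ℕ → (ℝ × ℝ) → ℂ),
      (∀ α, IsFiniteMeasure (ν α)) ∧ (∀ α, ν α Sᶜ = 0) ∧
      (∀ α, Measurable (w α)) ∧ (∀ α ξ, ‖w α ξ‖ = 1) ∧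
      (∀ ψ : 𝓢(ℝ × ℝ, ℂ), T' ψ = ∑ α ∈ (Finset.range (p + 1) ×ˢ Finset.range (p + 1)).filter
              (fun α : ℕ × ℕ => α.1 + α.2 ≤ p),
            (Complex.I ^ (α.1 + α.2))⁻¹ * ∫ ξ in S, mderiv2 α ψ ξ * w α ξ ∂(ν α)) := by
  classical
  have : CompactSpace S := isCompact_iff_compactSpace.1 hS
  set I := (Finset.range (p + 1) ×ˢ Finset.range (p + 1)).filter
              (fun α : ℕ × ℕ => α.1 + α.2 ≤ p) with hI
  have hcont : ∀ (α : ℕ × ℕ) (ψ : 𝓢(ℝ × ℝ, ℂ)), Continuous (mderiv2 α ψ) := fun α ψ =>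
    (mderiv2_smooth (ψ.smooth ⊤) α).continuous
  let J : 𝓢(ℝ × ℝ, ℂ) →ₗ[ℂ] (I → C(S, ℂ)) :=
    { toFun := fun ψ i => ⟨fun x => mderiv2 i.1 ψ x, (hcont i.1 ψ).comp continuous_subtype_val⟩
      map_add' := by
        intro f g; funext i; ext x
        exact (jetAt i.1 x).map_add f g
      map_smul' := by
        intro c f; funext i; ext x
        exact (jetAt i.1 x).map_smul c f }
  obtain ⟨L, hL⟩ := hb_factor J T'.toLinearMap M (by
    intro ψ
    refine hM ψ _ (norm_nonneg _) ?_
    intro α hα x hx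
    have hαI : α ∈ I := by rw [hI]; simp; omega
    calc ‖mderiv2 α ψ x‖ = ‖J ψ ⟨α, hαI⟩ ⟨x, hx⟩‖ := rfl
      _ ≤ ‖J ψ ⟨α, hαI⟩‖ := ContinuousMap.norm_coe_le_norm _ _
      _ ≤ ‖J ψ‖ := norm_le_pi_norm _ _)
  let Lc : ℕ × ℕ → (C(S, ℂ) →L[ℂ] ℂ) := fun α =>
    if h : α ∈ I then L.comp (ContinuousLinearMap.single ℂ (fun _ : I => C(S, ℂ)) ⟨α, h⟩) else 0
  have hk : ∀ α : ℕ × ℕ, ‖Complex.I ^ (α.1 + α.2)‖ = 1 := fun α => by simp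
  choose ν w h1 h2 h3 h4 h5 using fun α => riesz_set S hS (Lc α) (Complex.I ^ (α.1 + α.2)) (hk α)
  refine ⟨ν, w, h1, h2, h3, h4, ?_⟩
  intro ψ
  have e1 : T' ψ = ∑ i : I, L (Pi.single i (J ψ i)) := by
    rw [← map_sum, Finset.univ_sum_single]
    exact (hL ψ).symm
  rw [e1, ← Finset.sum_attach I, Finset.univ_eq_attach]
  apply Finset.sum_congr rfl
  intro i _
  rw [← h5 i.1 (mderiv2 i.1 ψ) (hcont i.1 ψ), ← mul_assoc, inv_mul_cancel₀ (by simp), one_mul]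
  simp only [Lc, i.2, dif_pos]
  rfl

end

/-- If the Fourier transform `T'` of a tempered distribution `T` on `ℝ²`
has order at most `p` and is supported in `[-c,c]²`, then `T` is represented by integration
against an entire function of the form
`Φ(x,y) = ∑_{|α| ≤ p} x^{α₁} y^{α₂} ∫_{[-c,c]²} e^{i(ξ₁x+ξ₂y)} dμ_α(ξ)`,
where each complex Radon measure `μ_α` is encoded via its polar decomposition `w_α · ν_α`. -/
theorem bandlimited_distribution_structure (p : ℕ) (c : ℝ) (T T' : TDist2)
    (hFT : ∀ ψ ψhat : SchwartzMap (ℝ × ℝ) ℂ,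
      (∀ ξ : ℝ × ℝ, ψhat ξ = paperFT (⇑ψ) ξ) → T' ψ = T ψhat)
    (hord : hasOrderAtMost2 T' p)
    (hsupp : distSupport2 T' ⊆ Set.Icc ((-c, -c) : ℝ × ℝ) ((c, c) : ℝ × ℝ)) :
    ∃ (ν : ℕ × ℕ → Measure (ℝ × ℝ)) (w : ℕ × ℕ → (ℝ × ℝ) → ℂ),
      (∀ α, IsFiniteMeasure (ν α)) ∧
      (∀ α, ν α (Set.Icc ((-c, -c) : ℝ × ℝ) ((c, c) : ℝ × ℝ))ᶜ = 0) ∧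
      (∀ α, Measurable (w α)) ∧
      (∀ α ξ, ‖w α ξ‖ = 1) ∧
      (∀ ψ : SchwartzMap (ℝ × ℝ) ℂ,
        T ψ = ∫ z : ℝ × ℝ,
          (∑ α ∈ (Finset.range (p + 1) ×ˢ Finset.range (p + 1)).filter
              (fun α : ℕ × ℕ => α.1 + α.2 ≤ p),
            (z.1 : ℂ) ^ α.1 * (z.2 : ℂ) ^ α.2 *
              ∫ ξ in Set.Icc ((-c, -c) : ℝ × ℝ) ((c, c) : ℝ × ℝ),
                Complex.exp (Complex.I * ((ξ.1 * z.1 + ξ.2 * z.2 : ℝ) : ℂ)) * w α ξ ∂(ν α)) *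
            ψ z) := by
  classical
  have hS : IsCompact (Set.Icc ((-c, -c) : ℝ × ℝ) ((c, c) : ℝ × ℝ)) := isCompact_Icc
  have hSe := Icc_eq_ball c
  obtain ⟨M, hM0, hM⟩ := bound_all T' p c (hSe ▸ hsupp) hord
  rw [← hSe] at hM
  obtain ⟨ν, w, h1, h2, h3, h4, h5⟩ := structure_aux p _ hS T' M hM0 hM
  refine ⟨ν, w, h1, h2, h3, h4, ?_⟩
  intro ψ
  rw [← hFT (invF ψ) ψ (paperFT_invF ψ), h5]
  have key := fun α : ℕ × ℕ => fubini_step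
    ((ν α).restrict (Set.Icc ((-c, -c) : ℝ × ℝ) ((c, c) : ℝ × ℝ))) (w α) (h3 α) (h4 α) _
    (mono_integrable ψ α.1 α.2)
  simp only [Finset.sum_mul]
  rw [integral_finsetSum]
  · apply Finset.sum_congr rfl
    intro α _
    have e : ∀ ξ : ℝ × ℝ, mderiv2 α (invF ψ) ξ * w α ξ = Complex.I ^ (α.1 + α.2) *
        ((∫ z : ℝ × ℝ, Complex.exp (Complex.I * ((ξ.1 * z.1 + ξ.2 * z.2 : ℝ) : ℂ)) *
          ((z.1 : ℂ) ^ α.1 * (z.2 : ℂ) ^ α.2 * ψ z)) * w α ξ) := by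
      intro ξ
      rw [mderiv2_invF, ← mul_assoc, ← integral_const_mul]
      congr 2
      ext z; ring
    simp only [e]
    rw [integral_const_mul, ← mul_assoc, inv_mul_cancel₀ (by simp), one_mul, (key α).2]
    congr 1
    ext z; ring
  · intro α _
    refine (key α).1.congr (Filter.Eventually.of_forall fun z => ?_)
    simp only
    ring
end
end
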